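/- Every 15-tough (P2 ∪ P3)-free graph on at least three vertices has a Hamiltonian cycle. -/

import Mathlib

open SimpleGraph

variable {V : Type*}

/-- The disjoint union `P2 ∪ P3`: edge 0-1, path 2-3-4, on `Fin 5`. -/
def P2P3 : SimpleGraph (Fin 5) := SimpleGraph.fromRel (fun a b =>
  (a = 0 ∧ b = 1) ∨ (a = 2 ∧ b = 3) ∨ (a = 3 ∧ b = 4))

/-- `G` has no induced subgraph isomorphic to `P2 ∪ P3`. -/
def P2P3Free (G : SimpleGraph V) : Prop :=
  ¬ ∃ f : Fin 5 ↪ V, ∀ a b, P2P3.Adj a b ↔ G.Adj (f a) (f b)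

/-- The number of connected components of `G - S`. -/
noncomputable def numComponents [Fintype V] (G : SimpleGraph V) (S : Finset V) : ℕ :=
  Nat.card ((G.induce ((↑S : Set V)ᶜ)).ConnectedComponent)

/-- `G` is `t`-tough: `|S| ≥ t·c(G-S)` whenever `c(G-S) ≥ 2`. -/
def IsTough [Fintype V] (t : ℝ) (G : SimpleGraph V) : Prop :=
  ∀ S : Finset V, 2 ≤ numComponents G S → t * numComponents G S ≤ S.card

/-!
A vertex `x` outside a maximal cycle `c` has low degree: the successors on `c` of the neighbours of
`x` form an independent set together with `x`, and an independent set has at most `|V| / 16`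
vertices by toughness. So it is enough to find one cycle through the set `L` of vertices of low
degree.

A set inducing a disjoint union of cliques can be covered by a cycle as follows. By toughness and
Hall's theorem each clique has two exits outside the set, all distinct; join the exits of
consecutive cliques by disjoint short walks and traverse each clique from one exit to the other.
The non-neighbours of an edge induce such a disjoint union, by `(P₂ ∪ P₃)`-freeness. Suppose
first that some set `C` of at least `9 |V| / 16` vertices induces one. If one of its cliques `K` is
large, cover the vertices with few neighbours in `K`; otherwise cover the vertices whose closed
neighbourhood within `C` is empty or one of the cliques. If there is no such `C`, then `L` is
independent and is itself covered.
-/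

section

/-! ## Cluster graphs and walks inside a vertex set -/

/-- The subgraph of `G` induced on `R` is a disjoint union of cliques. -/
def IsClusterOn (G : SimpleGraph V) (R : Set V) : Prop :=
  ∀ ⦃a b c⦄, a ∈ R → b ∈ R → c ∈ R → G.Adj a b → G.Adj b c → a ≠ c → G.Adj a c

/-- `u` and `v` are joined by a walk of `G` all of whose vertices lie in `s`. -/
def ReachableIn (G : SimpleGraph V) (s : Set V) (u v : V) : Prop :=
  ∃ p : G.Walk u v, ∀ x ∈ p.support, x ∈ s

variable {G : SimpleGraph V}

theorem IsClusterOn.mono {R R' : Set V} (h : IsClusterOn G R) (hR : R' ⊆ R) : IsClusterOn G R' :=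
  fun _ _ _ ha hb hc => h (hR ha) (hR hb) (hR hc)

namespace ReachableIn

variable {s s' : Set V} {u v w : V}

theorem refl (hu : u ∈ s) : ReachableIn G s u u :=
  ⟨.nil, by simpa using hu⟩

theorem symm (h : ReachableIn G s u v) : ReachableIn G s v u := by
  obtain ⟨p, hp⟩ := h
  exact ⟨p.reverse, by simpa using hp⟩

theorem trans (huv : ReachableIn G s u v) (hvw : ReachableIn G s v w) : ReachableIn G s u w := by
  obtain ⟨p, hp⟩ := huv
  obtain ⟨q, hq⟩ := hvw
  refine ⟨p.append q, fun x hx => ?_⟩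
  exact ((Walk.mem_support_append_iff p q).mp hx).elim (hp x) (hq x)

theorem of_adj (hu : u ∈ s) (hv : v ∈ s) (huv : G.Adj u v) : ReachableIn G s u v :=
  ⟨huv.toWalk, by simp [hu, hv]⟩

theorem mono (hs : s ⊆ s') (h : ReachableIn G s u v) : ReachableIn G s' u v :=
  let ⟨p, hp⟩ := h
  ⟨p, fun x hx => hs (hp x hx)⟩

theorem right_mem (h : ReachableIn G s u v) : v ∈ s :=
  let ⟨p, hp⟩ := h
  hp v p.end_mem_support

theorem exists_isPath (h : ReachableIn G s u v) :
    ∃ p : G.Walk u v, p.IsPath ∧ ∀ x ∈ p.support, x ∈ s := by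
  classical
  obtain ⟨p, hp⟩ := h
  exact ⟨p.bypass, p.bypass_isPath, fun x hx => hp x (p.support_bypass_subset_support hx)⟩

theorem mem_of_closed {P : Set V} (h : ReachableIn G s u v) (hu : u ∈ P)
    (hP : ∀ a ∈ P, ∀ b ∈ s, G.Adj a b → b ∈ P) : v ∈ P := by
  obtain ⟨p, hp⟩ := h
  induction p with
  | nil => exact hu
  | cons hadj p ih =>
    rw [Walk.support_cons, List.forall_mem_cons] at hp
    exact ih (hP _ hu _ (hp.2 _ p.start_mem_support) hadj) hp.2

end ReachableIn

theorem reachableIn_iff_reachable_induce {s : Set V} {u v : s} :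
    ReachableIn G s u v ↔ (G.induce s).Reachable u v := by
  constructor
  · rintro ⟨p, hp⟩
    exact ⟨p.induce s hp⟩
  · rintro ⟨p⟩
    refine ⟨p.map (Embedding.induce s).toHom, fun x hx => ?_⟩
    obtain ⟨y, -, rfl⟩ := List.mem_map.mp (Walk.support_map (Embedding.induce s).toHom p ▸ hx)
    exact y.2

theorem P2P3Free.isClusterOn_nonneighbors (hfree : P2P3Free G) {u v : V} (huv : G.Adj u v) :
    IsClusterOn G {x | ¬ G.Adj u x ∧ ¬ G.Adj v x} := by
  rintro a b c ⟨hua, hva⟩ ⟨hub, hvb⟩ ⟨huc, hvc⟩ hab hbc hne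
  by_contra hac
  have hua' : u ≠ a := by rintro rfl; exact hub hab
  have hub' : u ≠ b := by rintro rfl; exact huc hbc
  have huc' : u ≠ c := by rintro rfl; exact hub hbc.symm
  have hva' : v ≠ a := by rintro rfl; exact hvb hab
  have hvb' : v ≠ b := by rintro rfl; exact hvc hbc
  have hvc' : v ≠ c := by rintro rfl; exact hvb hbc.symm
  have huv' := huv.ne
  have hab' := hab.ne
  have hbc' := hbc.ne
  have hinj : Function.Injective ![u, v, a, b, c] := fun i j hij => by
    fin_cases i <;> fin_cases j <;> simp_all
  refine hfree ⟨⟨_, hinj⟩, fun i j => ?_⟩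
  change P2P3.Adj i j ↔ G.Adj (![u, v, a, b, c] i) (![u, v, a, b, c] j)
  fin_cases i <;> fin_cases j <;> simp [P2P3] <;> grind [SimpleGraph.adj_comm]

theorem P2P3Free.card_le_one_of_isClique (hfree : P2P3Free G) {K : Finset V} (hK : G.IsClique K)
    {a b c : V} (hab : G.Adj a b) (hbc : G.Adj b c) (hac : a ≠ c) (hac' : ¬G.Adj a c)
    (hKabc : ∀ p ∈ K, ¬G.Adj p a ∧ ¬G.Adj p b ∧ ¬G.Adj p c) : K.card ≤ 1 := by
  refine Finset.card_le_one.mpr fun p hp q hq => by_contra fun hpq => hac' ?_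
  obtain ⟨hpa, hpb, hpc⟩ := hKabc p hp
  obtain ⟨hqa, hqb, hqc⟩ := hKabc q hq
  exact hfree.isClusterOn_nonneighbors (hK hp hq hpq) ⟨hpa, hqa⟩ ⟨hpb, hqb⟩ ⟨hpc, hqc⟩ hab hbc hac

theorem P2P3Free.induce (hfree : P2P3Free G) (s : Set V) : P2P3Free (G.induce s) :=
  fun ⟨f, hf⟩ => hfree ⟨f.trans (Function.Embedding.subtype _), hf⟩

theorem P2P3Free.dist_le_four (hfree : P2P3Free G) (u v : V) : G.dist u v ≤ 4 := by
  by_contra! hlt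
  have hreach : G.Reachable u v := .of_dist_ne_zero (by omega)
  obtain ⟨p, hp⟩ := hreach.exists_walk_length_eq_dist
  have hdist (i : ℕ) (hi : i ≤ 5) : G.dist u (p.getVert i) = i := by
    rw [← length_eq_dist_of_subwalk hp (p.isSubwalk_take i), Walk.take_length]
    omega
  have hadj (i : ℕ) (hi : i < 5) : G.Adj (p.getVert i) (p.getVert (i + 1)) :=
    p.adj_getVert_succ (by omega)
  have hnadj (i j : ℕ) (hi : i ≤ 1) (hj : 3 ≤ j ∧ j ≤ 5) :
      ¬ G.Adj (p.getVert i) (p.getVert j) := by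
    intro h
    have := h.diff_dist_adj (u := u)
    rw [hdist i (by omega), hdist j (by omega)] at this
    omega
  have hmem (j : ℕ) (hj : 3 ≤ j ∧ j ≤ 5) :
      p.getVert j ∈ {x | ¬ G.Adj (p.getVert 0) x ∧ ¬ G.Adj (p.getVert 1) x} :=
    ⟨hnadj 0 j (by omega) hj, hnadj 1 j (by omega) hj⟩
  have hne : p.getVert 3 ≠ p.getVert 5 := fun h => by
    have := hdist 3 (by omega)
    rw [h, hdist 5 le_rfl] at this
    omega
  have h35 : G.Adj (p.getVert 3) (p.getVert 5) :=
    hfree.isClusterOn_nonneighbors (hadj 0 (by omega)) (hmem 3 (by omega)) (hmem 4 (by omega))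
      (hmem 5 (by omega)) (hadj 3 (by omega)) (hadj 4 (by omega)) hne
  have := h35.diff_dist_adj (u := u)
  rw [hdist 3 (by omega), hdist 5 le_rfl] at this
  omega

theorem P2P3Free.exists_reachableIn_card_le_five (hfree : P2P3Free G) {s : Set V} {u v : V}
    (h : ReachableIn G s u v) : ∃ Y : Finset V, ↑Y ⊆ s ∧ Y.card ≤ 5 ∧ ReachableIn G Y u v := by
  classical
  have hu : u ∈ s := h.symm.right_mem
  have hr : (G.induce s).Reachable ⟨u, hu⟩ ⟨v, h.right_mem⟩ :=
    reachableIn_iff_reachable_induce.mp h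
  obtain ⟨p, hp⟩ := hr.exists_walk_length_eq_dist
  have hlen : p.length ≤ 4 := hp ▸ (hfree.induce s).dist_le_four _ _
  let q : G.Walk u v := p.map (Embedding.induce s).toHom
  refine ⟨q.support.toFinset, fun x hx => ?_, ?_, q, fun x hx => List.mem_toFinset.mpr hx⟩
  · have hxq := Walk.support_map (Embedding.induce s).toHom p ▸ List.mem_toFinset.mp hx
    obtain ⟨y, -, rfl⟩ := List.mem_map.mp hxq
    exact y.2
  · calc q.support.toFinset.card ≤ q.support.length := q.support.toFinset_card_le
      _ = p.length + 1 := q.length_support.trans (congrArg (· + 1) (Walk.length_map _ p))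
      _ ≤ 5 := by omega

/-! ## Toughness -/

namespace IsTough

variable [Fintype V] {t : ℝ} {S : Finset V} {ι : Type*} {F : Finset ι} {P : ι → Set V}

theorem mul_card_le (ht : IsTough t G) (hF : 2 ≤ F.card) (hne : ∀ i ∈ F, (P i).Nonempty)
    (hS : ∀ i ∈ F, ∀ u ∈ P i, u ∉ S) (hdisj : ∀ i ∈ F, ∀ j ∈ F, ∀ u ∈ P i, u ∈ P j → i = j)
    (hclosed : ∀ i ∈ F, ∀ u ∈ P i, ∀ v ∉ S, G.Adj u v → v ∈ P i) : t * F.card ≤ S.card := by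
  choose x hx using hne
  let comp : F → (G.induce (↑S : Set V)ᶜ).ConnectedComponent := fun i =>
    (G.induce (↑S : Set V)ᶜ).connectedComponentMk ⟨x i i.2, hS i i.2 _ (hx i i.2)⟩
  have hcomp : Function.Injective comp := fun i j hij => by
    have hreach : ReachableIn G (↑S)ᶜ (x i i.2) (x j j.2) :=
      reachableIn_iff_reachable_induce.mpr (ConnectedComponent.exact hij)
    have hmem : x j j.2 ∈ P i := hreach.mem_of_closed (hx i i.2) (hclosed i i.2)
    exact Subtype.ext (hdisj i i.2 j j.2 _ hmem (hx j j.2))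
  have hcard : F.card ≤ numComponents G S := by
    simpa [numComponents] using Nat.card_le_card_of_injective comp hcomp
  rcases le_total 0 t with h0 | h0
  · calc t * F.card ≤ t * numComponents G S := by gcongr
      _ ≤ S.card := ht S (hF.trans hcard)
  · exact (mul_nonpos_of_nonpos_of_nonneg h0 F.card.cast_nonneg).trans S.card.cast_nonneg

theorem mul_card_add_one_le (ht : IsTough t G) (hF : F.Nonempty) (hne : ∀ i ∈ F, (P i).Nonempty)
    (hS : ∀ i ∈ F, ∀ u ∈ P i, u ∉ S) (hdisj : ∀ i ∈ F, ∀ j ∈ F, ∀ u ∈ P i, u ∈ P j → i = j)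
    (hclosed : ∀ i ∈ F, ∀ u ∈ P i, ∀ v ∉ S, G.Adj u v → v ∈ P i) {w : V} (hwS : w ∉ S)
    (hw : ∀ i ∈ F, w ∉ P i) : t * (F.card + 1) ≤ S.card := by
  let P' : Option ι → Set V := fun o => o.elim {u | u ∉ S ∧ ∀ i ∈ F, u ∉ P i} P
  have key : t * F.insertNone.card ≤ S.card := by
    refine ht.mul_card_le (P := P') ?_ ?_ ?_ ?_ ?_
    · simpa using hF.card_pos
    · exact Finset.forall_mem_insertNone.mpr ⟨⟨w, hwS, hw⟩, hne⟩
    · exact Finset.forall_mem_insertNone.mpr ⟨fun u hu => hu.1, hS⟩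
    · simp only [Finset.forall_mem_insertNone]
      refine ⟨⟨fun _ _ _ => trivial, fun i hi u hu hui => absurd hui (hu.2 i hi)⟩, fun i hi => ?_⟩
      exact ⟨fun u hui hu => absurd hui (hu.2 i hi), fun j hj u hui huj =>
        congrArg some (hdisj i hi j hj u hui huj)⟩
    · simp only [Finset.forall_mem_insertNone]
      refine ⟨fun u hu v hv huv => ⟨hv, fun i hi hvi => ?_⟩, hclosed⟩
      exact hu.2 i hi (hclosed i hi v hvi u hu.1 huv.symm)
  simpa using key

theorem mul_card_le_or_exists_mem (ht : IsTough t G) (hne : ∀ i ∈ F, (P i).Nonempty)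
    (hS : ∀ i ∈ F, ∀ u ∈ P i, u ∉ S) (hdisj : ∀ i ∈ F, ∀ j ∈ F, ∀ u ∈ P i, u ∈ P j → i = j)
    (hclosed : ∀ i ∈ F, ∀ u ∈ P i, ∀ v ∉ S, G.Adj u v → v ∈ P i) :
    t * F.card ≤ S.card ∨ F.card = 1 ∧ ∀ w ∉ S, ∃ i ∈ F, w ∈ P i := by
  rcases lt_or_ge 1 F.card with h2 | hF1
  · exact .inl (ht.mul_card_le h2 hne hS hdisj hclosed)
  rcases F.eq_empty_or_nonempty with rfl | hF
  · simp
  have hF1 : F.card = 1 := le_antisymm hF1 hF.card_pos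
  refine or_iff_not_imp_right.mpr fun hcover => ?_
  push Not at hcover
  obtain ⟨w, hwS, hw⟩ := hcover hF1
  have hle := ht.mul_card_add_one_le hF hne hS hdisj hclosed hwS hw
  rw [hF1] at hle ⊢
  push_cast at hle ⊢
  linarith [Nat.cast_nonneg (α := ℝ) S.card]

theorem reachableIn_compl (ht : IsTough t G) (hS : S.card < 2 * t) {u v : V} (hu : u ∉ S)
    (hv : v ∉ S) : ReachableIn G (↑S)ᶜ u v := by
  by_contra huv
  have := ht.mul_card_add_one_le (S := S) (F := {()}) (P := fun _ => {x | ReachableIn G (↑S)ᶜ u x})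
    (Finset.singleton_nonempty _) (fun _ _ => ⟨u, .refl hu⟩) (fun _ _ _ hx => hx.right_mem)
    (fun _ _ _ _ _ _ _ => rfl)
    (fun _ _ x hx y hy hxy => hx.trans (.of_adj hx.right_mem hy hxy)) hv (fun _ _ => huv)
  rw [Finset.card_singleton] at this
  push_cast at this
  linarith

theorem two_mul_le_degree (ht : IsTough t G) {v : V} [Fintype (G.neighborSet v)]
    (hv : G.degree v + 1 < Fintype.card V) : 2 * t ≤ G.degree v := by
  classical
  by_contra! hlt
  obtain ⟨u, -, hu⟩ := Finset.exists_mem_notMem_of_card_lt_card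
    (s := insert v (G.neighborFinset v)) (t := Finset.univ)
    ((Finset.card_insert_le _ _).trans_lt hv)
  simp only [Finset.mem_insert, mem_neighborFinset, not_or] at hu
  obtain ⟨huv, hadj⟩ := hu
  have hreach : ReachableIn G (↑(G.neighborFinset v))ᶜ v u :=
    ht.reachableIn_compl hlt (by simp) (by simpa using hadj)
  refine huv (hreach.mem_of_closed (P := {v}) rfl ?_)
  rintro a rfl b hb hab
  exact absurd hab (by simpa using hb)

theorem add_one_mul_card_le (ht : IsTough t G) {T : Finset V} (hT : G.IsIndepSet T)
    (hcard : 2 ≤ T.card) : (t + 1) * T.card ≤ Fintype.card V := by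
  classical
  have := ht.mul_card_le (S := Tᶜ) (F := T) (P := fun x => {x}) hcard (fun x _ => ⟨x, rfl⟩)
    (fun x hx _ hu => by simpa [Set.mem_singleton_iff.mp hu] using hx)
    (fun _ _ _ _ _ hx hy => hx.symm.trans hy)
    (fun x hx u hu v hv huv => by
      rw [Set.mem_singleton_iff.mp hu] at huv
      exact absurd huv (hT hx (by simpa using hv) huv.ne))
  rw [← Finset.card_add_card_compl T]
  push_cast
  linarith

theorem mul_card_add_one_le_of_isClusterOn (ht : IsTough t G) {R : Set V} (hR : IsClusterOn G R)
    (hRS : ∀ u ∈ R, u ∉ S) (hclosed : ∀ u ∈ R, ∀ v ∉ S, G.Adj u v → v ∈ R) {w : V} (hwS : w ∉ S)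
    (hw : w ∉ R) {T : Finset V} (hT : G.IsIndepSet T) (hTR : ∀ s ∈ T, s ∈ R) (hne : T.Nonempty) :
    t * (T.card + 1) ≤ S.card := by
  refine ht.mul_card_add_one_le (P := fun s => {v | v ∈ R ∧ (v = s ∨ G.Adj s v)}) hne
    (fun s hs => ⟨s, hTR s hs, .inl rfl⟩) (fun _ _ v hv => hRS v hv.1) ?_ ?_ hwS
    (fun _ _ h => hw h.1)
  · rintro s hs s' hs' v ⟨hv, hsv⟩ ⟨-, hsv'⟩
    by_contra hne
    have hss' := hT hs hs' hne
    rcases hsv with rfl | hsv <;> rcases hsv' with rfl | hsv'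
    · exact hne rfl
    · exact hss' hsv'.symm
    · exact hss' hsv
    · exact hss' (hR (hTR s hs) hv (hTR s' hs') hsv hsv'.symm hne)
  · rintro s hs u ⟨hu, hsu⟩ v hv huv
    have hvR : v ∈ R := hclosed u hu v hv huv
    refine ⟨hvR, or_iff_not_imp_left.mpr fun hvs => ?_⟩
    rcases hsu with rfl | hsu
    · exact huv
    · exact hR (hTR s hs) hu hvR hsu huv (Ne.symm hvs)

end IsTough

/-! ## Maximal cycles -/

/-- `X` is the vertex set of a cycle of `G`. -/
def IsCycleSet (G : SimpleGraph V) (X : Set V) : Prop :=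
  ∃ (a : V) (c : G.Walk a a), c.IsCycle ∧ ∀ v, v ∈ c.support ↔ v ∈ X

section Walk

variable {a u v w : V}

theorem isPath_append_cons {x y : V} {p : G.Walk u v} {q : G.Walk x y} (hp : p.IsPath)
    (hq : q.IsPath) (h : G.Adj v x) (hpq : ∀ z ∈ p.support, z ∉ q.support) :
    (p.append (.cons h q)).IsPath := by
  rw [Walk.isPath_def, Walk.support_append, Walk.support_cons, List.tail_cons, List.nodup_append']
  exact ⟨hp.support_nodup, hq.support_nodup, fun z hz hz' => hpq z hz hz'⟩

theorem mem_support_append_cons {x y z : V} {p : G.Walk u v} {q : G.Walk x y} {h : G.Adj v x} :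
    z ∈ (p.append (.cons h q)).support ↔ z ∈ p.support ∨ z ∈ q.support := by
  rw [Walk.support_append, Walk.support_cons, List.tail_cons, List.mem_append]

theorem isCycleSet_support {p : G.Walk u v} (hp : p.IsPath) (h : G.Adj v u) (hlen : 2 ≤ p.length) :
    IsCycleSet G {x | x ∈ p.support} := by
  refine ⟨v, .cons h p, (Walk.cons_isCycle_iff p h).mpr ⟨hp, fun hmem => ?_⟩, fun x => ?_⟩
  · have := hp.length_eq_one_of_mem_edges (Sym2.eq_swap ▸ hmem)
    omega
  · rw [Walk.support_cons, List.mem_cons, Set.mem_ofPred_eq, or_iff_right_iff_imp]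
    rintro rfl
    exact p.end_mem_support

theorem IsCycleSet.isHamiltonian [Fintype V] [DecidableEq V] (h : IsCycleSet G Set.univ) :
    G.IsHamiltonian := by
  obtain ⟨a, c, hc, hmem⟩ := h
  refine fun _ => ⟨a, c, ?_⟩
  rw [Walk.isHamiltonianCycle_iff_isCycle_and_support_count_tail_eq_one]
  refine ⟨hc, fun v => List.count_eq_one_of_mem hc.support_nodup ?_⟩
  have hv : v ∈ c.support := (hmem v).mpr trivial
  rcases (Walk.mem_support_iff c).mp hv with rfl | hv
  · exact Walk.end_mem_tail_support hc.not_nil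
  · exact hv

theorem exists_append_cons_of_mem_darts {p : G.Walk u v} {e : G.Dart} (he : e ∈ p.darts) :
    ∃ (q : G.Walk u e.fst) (r : G.Walk e.snd v), p = q.append (.cons e.adj r) := by
  induction p with
  | nil => simp at he
  | cons h p ih =>
    rcases List.mem_cons.mp he with rfl | he
    · exact ⟨.nil, p, rfl⟩
    · obtain ⟨q, r, rfl⟩ := ih he
      exact ⟨.cons h q, r, rfl⟩

theorem exists_cons_of_mem_cycle_support {c : G.Walk a a} (hc : c.IsCycle) (hu : u ∈ c.support) :
    ∃ (v : V) (h : G.Adj u v) (p : G.Walk v u), p.IsPath ∧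
      (∀ x, x ∈ p.support ↔ x ∈ c.support) ∧ ∀ e, e ∈ c.darts ↔ e = ⟨(u, v), h⟩ ∨ e ∈ p.darts := by
  classical
  have hcycle := hc.rotate hu
  have hdarts := c.rotate_darts u hu
  have hsupp : ∀ x, x ∈ (c.rotate u hu).support ↔ x ∈ c.support := fun x =>
    c.mem_support_rotate_iff u hu
  cases hrot : c.rotate u hu with
  | nil => exact absurd (hrot ▸ hcycle) Walk.not_isCycle_nil
  | cons h p =>
    rw [hrot] at hcycle hdarts hsupp
    refine ⟨_, h, p, ((Walk.cons_isCycle_iff p h).mp hcycle).1, fun x => ?_, fun e => ?_⟩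
    · rw [← hsupp, Walk.support_cons, List.mem_cons, iff_or_self]
      rintro rfl
      exact p.end_mem_support
    · rw [← hdarts.mem_iff, Walk.darts_cons, List.mem_cons]

theorem exists_isPath_of_mem_cycle_darts {c : G.Walk a a} (hc : c.IsCycle) {d : G.Dart}
    (hd : d ∈ c.darts) : ∃ p : G.Walk d.snd d.fst, p.IsPath ∧
      (∀ x, x ∈ p.support ↔ x ∈ c.support) ∧ ∀ e ∈ c.darts, e = d ∨ e ∈ p.darts := by
  obtain ⟨v, h, p, hp, hsupp, hdarts⟩ :=
    exists_cons_of_mem_cycle_support hc (c.dart_fst_mem_support_of_mem_darts hd)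
  rcases (hdarts d).mp hd with hdv | hdp
  · obtain rfl : d.snd = v := congrArg (·.snd) hdv
    exact ⟨p, hp, hsupp, fun e he => ((hdarts e).mp he).imp_left (·.trans hdv.symm)⟩
  · obtain ⟨q, r, rfl⟩ := exists_append_cons_of_mem_darts hdp
    rw [Walk.isPath_def, Walk.support_append, Walk.support_cons, List.tail_cons,
      List.nodup_append'] at hp
    exact absurd r.end_mem_support (hp.2.2 q.end_mem_support)

end Walk

section Maximal

variable {X : Set V} {a u v : V}

theorem exists_maximal_isCycleSet [Finite V] {X₀ : Set V} (h : IsCycleSet G X₀) :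
    ∃ X, X₀ ⊆ X ∧ Maximal (IsCycleSet G) X :=
  (Set.toFinite {X | IsCycleSet G X}).exists_le_maximal h

variable {c : G.Walk a a} {P : G.Walk u v} {d e : G.Dart}

theorem not_adj_dart_snd_of_maximal (hX : Maximal (IsCycleSet G) {x | x ∈ c.support})
    (hc : c.IsCycle) (hd : d ∈ c.darts) (hP : P.IsPath) (hPc : ∀ x ∈ P.support, x ∉ c.support)
    (hu : G.Adj d.fst u) : ¬ G.Adj v d.snd := by
  intro hv
  obtain ⟨p, hp, hsupp, -⟩ := exists_isPath_of_mem_cycle_darts hc hd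
  have hcycle : IsCycleSet G {x | x ∈ (p.append (.cons hu P)).support} := by
    refine isCycleSet_support (isPath_append_cons hp hP hu fun z hz hzP => ?_) hv ?_
    · exact hPc z hzP ((hsupp z).mp hz)
    · have : p.length ≠ 0 := fun h0 => d.adj.ne (Walk.eq_of_length_eq_zero h0).symm
      rw [Walk.length_append, Walk.length_cons]
      omega
  refine hPc u P.start_mem_support (hX.le_of_ge hcycle (fun x hx => ?_) ?_)
  · exact mem_support_append_cons.mpr (.inl ((hsupp x).mpr hx))
  · exact mem_support_append_cons.mpr (.inr P.start_mem_support)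

theorem not_adj_dart_snd_snd_of_maximal (hX : Maximal (IsCycleSet G) {x | x ∈ c.support})
    (hc : c.IsCycle) (hd : d ∈ c.darts) (he : e ∈ c.darts) (hde : d ≠ e) (hP : P.IsPath)
    (hPc : ∀ x ∈ P.support, x ∉ c.support) (hu : G.Adj d.fst u) (hv : G.Adj v e.fst) :
    ¬ G.Adj d.snd e.snd := by
  intro hadj
  obtain ⟨p, hp, hsupp, hdarts⟩ := exists_isPath_of_mem_cycle_darts hc hd
  obtain ⟨q, r, rfl⟩ := exists_append_cons_of_mem_darts ((hdarts e he).resolve_left hde.symm)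
  have hqr : ∀ z ∈ q.support, z ∉ r.support := by
    rw [Walk.isPath_def, Walk.support_append, Walk.support_cons, List.tail_cons,
      List.nodup_append'] at hp
    exact fun z hz => hp.2.2 hz
  have hr : r.IsPath := (Walk.cons_isPath_iff _ _ |>.mp hp.of_append_right).1
  let s := q.reverse.append (.cons hadj r)
  have hs : s.IsPath := isPath_append_cons hp.of_append_left.reverse hr hadj (by simpa using hqr)
  have hsc : ∀ x, x ∈ s.support ↔ x ∈ c.support := fun x => by
    rw [← hsupp, mem_support_append_cons, mem_support_append_cons, Walk.support_reverse,
      List.mem_reverse]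
  have hcycle : IsCycleSet G {x | x ∈ (P.append (.cons hv s)).support} := by
    refine isCycleSet_support (isPath_append_cons hP hs hv fun z hz hzs => ?_) hu ?_
    · exact hPc z hz ((hsc z).mp hzs)
    · simp only [s, Walk.length_append, Walk.length_cons]
      omega
  refine hPc u P.start_mem_support (hX.le_of_ge hcycle (fun x hx => ?_) ?_)
  · exact mem_support_append_cons.mpr (.inr ((hsc x).mpr hx))
  · exact mem_support_append_cons.mpr (.inl P.start_mem_support)

theorem exists_isIndepSet_of_maximal (hX : Maximal (IsCycleSet G) X) {x : V} {W : Finset V}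
    (hW : ∀ w ∈ W, w ∈ X ∧ ∃ y, ReachableIn G Xᶜ x y ∧ G.Adj w y) :
    ∃ T : Finset V, T.card = W.card ∧ ↑T ⊆ X ∧ G.IsIndepSet T ∧
      ∀ t ∈ T, ∀ y, ReachableIn G Xᶜ x y → ¬ G.Adj t y := by
  classical
  obtain ⟨a, c, hc, hcX⟩ := hX.prop
  obtain rfl : X = {v | v ∈ c.support} := Set.ext fun v => (hcX v).symm
  have hdart : ∀ w : W, ∃ d ∈ c.darts, d.fst = w := fun w => by
    obtain ⟨v, h, p, -, -, hdarts⟩ := exists_cons_of_mem_cycle_support hc (hW w w.2).1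
    exact ⟨_, (hdarts _).mpr (.inl rfl), rfl⟩
  choose d hd hfst using hdart
  have hinj : Function.Injective d := fun w w' h => Subtype.ext (by rw [← hfst, ← hfst, h])
  have hsnd : ∀ e ∈ c.darts, ∀ e' ∈ c.darts, e.snd = e'.snd → e = e' := fun e he e' he' =>
    List.inj_on_of_nodup_map (by rw [c.map_snd_darts]; exact hc.support_nodup) he he'
  refine ⟨Finset.univ.image fun w => (d w).snd, ?_, ?_, ?_, ?_⟩
  · rw [Finset.card_image_of_injective _ fun w w' h => hinj (hsnd _ (hd w) _ (hd w') h)]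
    simp
  · intro v hv
    obtain ⟨w, -, rfl⟩ := Finset.mem_image.mp hv
    exact c.dart_snd_mem_support_of_mem_darts (hd w)
  · intro v hv v' hv' hne
    obtain ⟨w, -, rfl⟩ := Finset.mem_image.mp hv
    obtain ⟨w', -, rfl⟩ := Finset.mem_image.mp hv'
    obtain ⟨y, hy, hwy⟩ := (hW w w.2).2
    obtain ⟨y', hy', hwy'⟩ := (hW w' w'.2).2
    obtain ⟨P, hP, hPc⟩ := (hy.symm.trans hy').exists_isPath
    exact not_adj_dart_snd_snd_of_maximal hX hc (hd w) (hd w') (fun h => hne (congrArg (·.snd) h))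
      hP hPc (hfst w ▸ hwy) (hfst w' ▸ hwy'.symm)
  · intro v hv y' hy' hadj
    obtain ⟨w, -, rfl⟩ := Finset.mem_image.mp hv
    obtain ⟨y, hy, hwy⟩ := (hW w w.2).2
    obtain ⟨P, hP, hPc⟩ := (hy.symm.trans hy').exists_isPath
    exact not_adj_dart_snd_of_maximal hX hc (hd w) hP hPc (hfst w ▸ hwy) hadj.symm

section Tough

variable [Fintype V] {t : ℝ} {x y : V}

theorem IsTough.exists_attachments_of_maximal (ht : IsTough t G) (h0 : 0 < t)
    (hX : Maximal (IsCycleSet G) X) (hx : x ∉ X) :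
    ∃ W T : Finset V, (∀ w, w ∈ W ↔ w ∈ X ∧ ∃ y, ReachableIn G Xᶜ x y ∧ G.Adj w y) ∧
      T.Nonempty ∧ T.card = W.card ∧ ↑T ⊆ X ∧ G.IsIndepSet T ∧
      ∀ t ∈ T, ∀ y, ReachableIn G Xᶜ x y → ¬ G.Adj t y := by
  classical
  let W : Finset V := {w | w ∈ X ∧ ∃ y, ReachableIn G Xᶜ x y ∧ G.Adj w y}
  have hW : ∀ w, w ∈ W ↔ w ∈ X ∧ ∃ y, ReachableIn G Xᶜ x y ∧ G.Adj w y := by simp [W]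
  obtain ⟨T, hTW, hT⟩ := exists_isIndepSet_of_maximal hX fun w => (hW w).mp
  refine ⟨W, T, hW, Finset.card_pos.mp (hTW ▸ Finset.card_pos.mpr ?_), hTW, hT⟩
  by_contra hempty
  obtain ⟨a, c, -, hcX⟩ := hX.prop
  have haX : a ∈ X := (hcX a).mp c.start_mem_support
  have hreach : ReachableIn G (↑(∅ : Finset V))ᶜ x a :=
    ht.reachableIn_compl (by simpa using h0) (by simp) (by simp)
  have ha : ReachableIn G Xᶜ x a := by
    refine hreach.mem_of_closed (P := {y | ReachableIn G Xᶜ x y}) (.refl hx) fun y hy v _ hyv => ?_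
    refine hy.trans (.of_adj hy.right_mem (fun hvX => hempty ⟨v, ?_⟩) hyv)
    exact (hW v).mpr ⟨hvX, y, hy, hyv.symm⟩
  exact ha.right_mem haX

theorem IsTough.mem_of_adj_of_maximal (ht : IsTough t G) (h1 : 1 ≤ t) (hfree : P2P3Free G)
    (hX : Maximal (IsCycleSet G) X) (hx : x ∉ X) (hxy : G.Adj x y) : y ∈ X := by
  obtain ⟨W, T, hW, hne, hTW, hTX, hT, hTH⟩ := ht.exists_attachments_of_maximal (by linarith) hX hx
  by_contra hyX
  let H : Set V := {z | ReachableIn G Xᶜ x z}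
  have hxH : x ∈ H := .refl hx
  have hyH : y ∈ H := .of_adj hx hyX hxy
  have hHclosed : ∀ z ∈ H, ∀ v ∉ W, G.Adj z v → v ∈ H := fun z hz v hv hzv =>
    hz.trans (.of_adj hz.right_mem (fun hvX => hv ((hW v).mpr ⟨hvX, z, hz, hzv.symm⟩)) hzv)
  have hcluster : IsClusterOn G {v | v ∉ W ∧ v ∉ H} :=
    (hfree.isClusterOn_nonneighbors hxy).mono fun v hv =>
      ⟨fun h => hv.2 (hHclosed x hxH v hv.1 h), fun h => hv.2 (hHclosed y hyH v hv.1 h)⟩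
  have hTR : ∀ s ∈ T, s ∉ W ∧ s ∉ H := fun s hs => by
    refine ⟨fun hsW => ?_, fun hsH => ReachableIn.right_mem hsH (hTX hs)⟩
    obtain ⟨-, z, hz, hsz⟩ := (hW s).mp hsW
    exact hTH s hs z hz hsz
  have := ht.mul_card_add_one_le_of_isClusterOn hcluster (fun _ hu => hu.1)
    (fun u hu v hv huv => ⟨hv, fun hvH => hu.2 (hHclosed v hvH u hu.1 huv.symm)⟩)
    (fun h => hx ((hW x).mp h).1) (fun h => h.2 hxH) hT hTR hne
  rw [hTW] at this
  nlinarith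

theorem IsTough.mul_degree_add_one_le_of_maximal (ht : IsTough t G) (h1 : 1 ≤ t)
    (hfree : P2P3Free G) (hX : Maximal (IsCycleSet G) X) (hx : x ∉ X)
    [Fintype (G.neighborSet x)] : (t + 1) * (G.degree x + 1) ≤ Fintype.card V := by
  classical
  obtain ⟨W, T, hW, hne, hTW, hTX, hT, hTH⟩ := ht.exists_attachments_of_maximal (by linarith) hX hx
  have hdeg : G.degree x ≤ W.card := Finset.card_le_card fun y hy => by
    have hxy : G.Adj x y := by simpa using hy
    exact (hW y).mpr ⟨ht.mem_of_adj_of_maximal h1 hfree hX hx hxy, x, .refl hx, hxy.symm⟩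
  have hcard : (insert x T).card = W.card + 1 := by
    rw [Finset.card_insert_of_notMem fun h => hx (hTX h), hTW]
  have hT' : G.IsIndepSet (insert x T : Finset V) := by
    rw [Finset.coe_insert, isIndepSet_iff, Set.pairwise_insert]
    exact ⟨hT, fun y hy _ => ⟨fun h => hTH y hy x (.refl hx) h.symm, hTH y hy x (.refl hx)⟩⟩
  have hpos : 0 < W.card := hTW ▸ hne.card_pos
  calc (t + 1) * (G.degree x + 1) ≤ (t + 1) * (insert x T : Finset V).card := by
        rw [hcard]
        push_cast
        gcongr
    _ ≤ Fintype.card V := ht.add_one_mul_card_le hT' (by omega)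

end Tough

end Maximal

/-! ## Clique partitions and their exits -/

/-- The cliques `Q i` are the connected components of the subgraph of `G` induced on `R`. -/
structure IsCliquePartition {ι : Type*} (G : SimpleGraph V) (R : Finset V) (Q : ι → Finset V) :
    Prop where
  mem_iff : ∀ v, v ∈ R ↔ ∃ i, v ∈ Q i
  nonempty : ∀ i, (Q i).Nonempty
  isClique : ∀ i, G.IsClique (Q i)
  eq_of_mem : ∀ ⦃i j v⦄, v ∈ Q i → v ∈ Q j → i = j
  eq_of_adj : ∀ ⦃i j u v⦄, u ∈ Q i → v ∈ Q j → G.Adj u v → i = j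

theorem IsClusterOn.exists_isCliquePartition {R : Finset V} (hR : IsClusterOn G (R : Set V))
    (hne : R.Nonempty) : ∃ (k : ℕ) (Q : Fin (k + 1) → Finset V), IsCliquePartition G R Q := by
  classical
  have htrans : ∀ {a b c : R}, a = b ∨ G.Adj a b → b = c ∨ G.Adj b c → a = c ∨ G.Adj a c := by
    rintro a b c (rfl | hab) (rfl | hbc)
    · exact .inl rfl
    · exact .inr hbc
    · exact .inr hab
    · exact or_iff_not_imp_left.mpr fun hac =>
        hR a.2 b.2 c.2 hab hbc (Subtype.coe_injective.ne hac)
  let s : Setoid R := ⟨fun u v => u = v ∨ G.Adj u v, fun _ => .inl rfl,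
    fun h => h.imp Eq.symm Adj.symm, htrans⟩
  have : Nonempty (Quotient s) := ⟨⟦⟨hne.choose, hne.choose_spec⟩⟧⟩
  obtain ⟨k, hk⟩ := Nat.exists_eq_succ_of_ne_zero (Fintype.card_ne_zero (α := Quotient s))
  let e : Quotient s ≃ Fin (k + 1) := Fintype.equivFinOfCardEq hk
  let Q : Fin (k + 1) → Finset V := fun i =>
    ({v : R | e ⟦v⟧ = i} : Finset R).map (Function.Embedding.subtype _)
  have hQ : ∀ i v, v ∈ Q i ↔ ∃ h : v ∈ R, e ⟦⟨v, h⟩⟧ = i := by simp [Q]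
  refine ⟨k, Q, fun v => ⟨fun hv => ⟨_, (hQ _ v).mpr ⟨hv, rfl⟩⟩, ?_⟩, fun i => ?_, ?_, ?_, ?_⟩
  · rintro ⟨i, hi⟩
    exact ((hQ i v).mp hi).1
  · obtain ⟨v, hv⟩ := Quotient.exists_rep (e.symm i)
    exact ⟨v, (hQ i v).mpr ⟨v.2, by simp [hv]⟩⟩
  · rintro i u hu v hv huv
    obtain ⟨hu, hui⟩ := (hQ i u).mp hu
    obtain ⟨hv, hvi⟩ := (hQ i v).mp hv
    have : (⟨u, hu⟩ : R) = ⟨v, hv⟩ ∨ G.Adj u v :=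
      Quotient.exact (e.injective (hui.trans hvi.symm))
    exact this.resolve_left fun h => huv (congrArg Subtype.val h)
  · intro i j v hi hj
    obtain ⟨_, rfl⟩ := (hQ i v).mp hi
    exact ((hQ j v).mp hj).2
  · intro i j u v hi hj huv
    obtain ⟨hu, rfl⟩ := (hQ i u).mp hi
    obtain ⟨hv, rfl⟩ := (hQ j v).mp hj
    exact congrArg e (Quotient.sound (.inr huv))

namespace IsCliquePartition

variable {ι : Type*} {R : Finset V} {Q : ι → Finset V}

theorem subset (h : IsCliquePartition G R Q) (i : ι) : Q i ⊆ R :=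
  fun v hv => (h.mem_iff v).mpr ⟨i, hv⟩

theorem mem_of_adj (h : IsCliquePartition G R Q) {i : ι} {u v : V} (hu : u ∈ Q i)
    (huv : G.Adj u v) (hv : v ∈ R) : v ∈ Q i := by
  obtain ⟨j, hj⟩ := (h.mem_iff v).mp hv
  exact h.eq_of_adj hu hj huv ▸ hj

theorem not_adj_of_mem_sdiff [DecidableEq V] (h : IsCliquePartition G R Q) {i : ι} {u z : V}
    (hu : u ∈ R \ Q i) (hz : z ∈ Q i) : ¬G.Adj u z := fun huz =>
  (Finset.mem_sdiff.mp hu).2 (h.mem_of_adj hz huz.symm (Finset.mem_sdiff.mp hu).1)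

theorem exists_adj_of_card_lt [Fintype ι] (h : IsCliquePartition G R Q) {X : Finset V} (hX : X ⊆ R)
    (hcard : Fintype.card ι < X.card) : ∃ u ∈ X, ∃ v ∈ X, G.Adj u v := by
  obtain ⟨v, hv⟩ := Finset.card_pos.mp (Nat.zero_lt_of_lt hcard)
  have : Nonempty ι := ((h.mem_iff v).mp (hX hv)).nonempty
  choose! f hf using fun v hv => (h.mem_iff v).mp (hX hv)
  obtain ⟨u, hu, v, hv, huv, hfuv⟩ := Finset.exists_ne_map_eq_of_card_lt_of_maps_to
    (t := Finset.univ) hcard (fun v _ => Finset.mem_univ (f v))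
  exact ⟨u, hu, v, hv, h.isClique _ (hf u hu) (hfuv ▸ hf v hv) huv⟩

theorem nonempty_embedding (h : IsCliquePartition G R Q) : Nonempty (ι ↪ R) := by
  choose v hv using h.nonempty
  refine ⟨fun i => ⟨v i, h.subset i (hv i)⟩, fun i j hij => ?_⟩
  exact h.eq_of_mem (hv i) ((Subtype.mk.inj hij).symm ▸ hv j)

theorem finite (h : IsCliquePartition G R Q) : Finite ι :=
  let ⟨f⟩ := h.nonempty_embedding
  .of_injective f f.injective

theorem card_le [Fintype ι] (h : IsCliquePartition G R Q) : Fintype.card ι ≤ R.card := by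
  obtain ⟨f⟩ := h.nonempty_embedding
  simpa using Fintype.card_le_of_embedding f

section Tough

variable [Fintype V] [Fintype ι] {t : ℝ}

theorem mul_card_le_card_compl [DecidableEq V] (h : IsCliquePartition G R Q) (ht : IsTough t G)
    (hι : 2 ≤ Fintype.card ι) : t * Fintype.card ι ≤ Rᶜ.card :=
  ht.mul_card_le (F := Finset.univ) (P := fun i => Q i) hι (fun i _ => h.nonempty i)
    (fun i _ _ hu => by simpa using h.subset i hu) (fun _ _ _ _ _ hi hj => h.eq_of_mem hi hj)
    fun i _ u hu v hv huv => h.mem_of_adj hu huv (by simpa using hv)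

theorem add_one_mul_card_le (h : IsCliquePartition G R Q) (ht : IsTough t G)
    (hι : 2 ≤ Fintype.card ι) : (t + 1) * Fintype.card ι ≤ Fintype.card V := by
  classical
  have hcompl := h.mul_card_le_card_compl ht hι
  have hcard : (Fintype.card ι : ℝ) ≤ R.card := by exact_mod_cast h.card_le
  rw [← Finset.card_add_card_compl R]
  push_cast
  linarith

end Tough

end IsCliquePartition

/-- The neighbours of `X` outside `Z`. -/
noncomputable def outNeighbors [Fintype V] (G : SimpleGraph V) (Z X : Finset V) : Finset V := by
  classical exact {y | y ∉ Z ∧ ∃ x ∈ X, G.Adj x y}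

theorem mem_outNeighbors [Fintype V] {Z X : Finset V} {y : V} :
    y ∈ outNeighbors G Z X ↔ y ∉ Z ∧ ∃ x ∈ X, G.Adj x y := by
  classical simp [outNeighbors]

theorem IsCliquePartition.mul_card_le_card_outNeighbors [Fintype V] [DecidableEq V] {ι : Type*}
    {Z X : Finset V} {Q : ι → Finset V} {t : ℝ} (h : IsCliquePartition G Z Q) (ht : IsTough t G)
    (hZ : t - 1 ≤ Zᶜ.card) {F : Finset ι} (hne : ∀ i ∈ F, (Q i ∩ X).Nonempty)
    (hF : ∀ i ∈ F, (Q i \ X).card ≤ 1) : (t - 1) * F.card ≤ (outNeighbors G Z X).card := by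
  let S : Finset V := outNeighbors G Z X ∪ F.biUnion fun i => Q i \ X
  have hS : S.card ≤ (outNeighbors G Z X).card + F.card := by
    refine (Finset.card_union_le _ _).trans ?_
    gcongr
    simpa using Finset.card_biUnion_le_card_mul F (fun i => Q i \ X) 1 hF
  have hcast : (S.card : ℝ) ≤ (outNeighbors G Z X).card + F.card := by exact_mod_cast hS
  have hXS : ∀ i ∈ F, ∀ u ∈ Q i, u ∉ S ↔ u ∈ X := fun i hi u hu => by
    have huZ : u ∈ Z := h.subset i hu
    simp only [S, Finset.mem_union, mem_outNeighbors, huZ, Finset.mem_biUnion, Finset.mem_sdiff]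
    exact ⟨fun huS => by_contra fun huX => huS (.inr ⟨i, hi, hu, huX⟩), fun huX => by tauto⟩
  let P : ι → Set V := fun i => {u | u ∈ Q i ∧ u ∉ S}
  have hP : ∀ i ∈ F, (P i).Nonempty := fun i hi => by
    obtain ⟨u, hu⟩ := hne i hi
    rw [Finset.mem_inter] at hu
    exact ⟨u, hu.1, (hXS i hi u hu.1).mpr hu.2⟩
  have hclosed : ∀ i ∈ F, ∀ u ∈ P i, ∀ v ∉ S, G.Adj u v → v ∈ P i := by
    rintro i hi u ⟨hu, huS⟩ v hv huv
    have hvZ : v ∈ Z := by_contra fun hvZ => hv <| Finset.mem_union_left _ <|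
      mem_outNeighbors.mpr ⟨hvZ, u, (hXS i hi u hu).mp huS, huv⟩
    exact ⟨h.mem_of_adj hu huv hvZ, hv⟩
  rcases ht.mul_card_le_or_exists_mem hP (fun _ _ _ hu => hu.2)
    (fun _ _ _ _ _ hi hj => h.eq_of_mem hi.1 hj.1) hclosed with hle | ⟨hF1, hcover⟩
  · linarith
  · have hsub : Zᶜ ⊆ outNeighbors G Z X := fun v hv => by
      by_contra hvN
      have hvF : ∀ i, v ∉ Q i := fun i hi => Finset.mem_compl.mp hv (h.subset i hi)
      obtain ⟨i, -, hi⟩ := hcover v (by simp [S, hvN, hvF])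
      exact hvF i hi.1
    calc (t - 1) * F.card = t - 1 := by rw [hF1, Nat.cast_one, mul_one]
      _ ≤ Zᶜ.card := hZ
      _ ≤ (outNeighbors G Z X).card := by exact_mod_cast Finset.card_le_card hsub

section Transversal

variable {π ι α : Type*} [DecidableEq ι] [DecidableEq α] {c : π → ι} {N : π → Finset α}

/- Hall's theorem, with a common stock of `d i` dummy images for the members of the class `i`. -/
theorem exists_partial_transversal {d : ι → ℕ}
    (h : ∀ A : Finset π, A.card ≤ (A.biUnion N).card + ∑ i ∈ A.image c, d i) :
    ∃ f : π → Option α, (∀ x y a, f x = some a → f y = some a → x = y) ∧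
      (∀ x a, f x = some a → a ∈ N x) ∧
      ∀ i (B : Finset π), (∀ x ∈ B, c x = i ∧ f x = none) → B.card ≤ d i := by
  classical
  let D : Finset ι → Finset (Σ _ : ι, ℕ) := fun I => I.sigma fun i => Finset.range (d i)
  let N' : π → Finset (α ⊕ Σ _ : ι, ℕ) := fun x => (N x).disjSum (D {c x})
  have hHall : ∀ A : Finset π, A.card ≤ (A.biUnion N').card := fun A => by
    calc A.card ≤ ((A.biUnion N).disjSum (D (A.image c))).card := by
          simpa [D, Finset.card_disjSum] using h A
      _ ≤ (A.biUnion N').card := Finset.card_le_card fun z hz => by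
          rcases z with a | ⟨i, j⟩ <;> simp_all [N', D, eq_comm]
  obtain ⟨f, hf, hfN⟩ := (Finset.all_card_le_biUnion_card_iff_exists_injective N').mp hHall
  refine ⟨fun x => (f x).getLeft?, fun x y a hx hy => hf ?_, fun x a hx => ?_, fun i B hB => ?_⟩
  · rw [Sum.getLeft?_eq_some_iff.mp hx, Sum.getLeft?_eq_some_iff.mp hy]
  · have := hfN x
    rwa [Sum.getLeft?_eq_some_iff.mp hx, Finset.inl_mem_disjSum] at this
  · have hsub : B.image f ⊆ (D {i}).map .inr := Finset.image_subset_iff.mpr fun x hx => by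
      obtain ⟨rfl, hnone⟩ := hB x hx
      obtain ⟨z, hz⟩ := Sum.isRight_iff.mp (Sum.getLeft?_eq_none_iff.mp hnone)
      have := hfN x
      rw [hz, Finset.inr_mem_disjSum] at this
      simpa [hz] using this
    simpa [D, Finset.card_image_of_injective _ hf] using Finset.card_le_card hsub

theorem card_le_card_biUnion_add_sum [Fintype π] [DecidableEq π]
    (hc : ∀ i, 2 ≤ (Finset.univ.filter fun x => c x = i).card)
    (hN : ∀ (A : Finset π) (F : Finset ι),
      (∀ i ∈ F, (Finset.univ.filter fun x => c x = i ∧ x ∉ A).card ≤ 1) →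
        2 * F.card ≤ (A.biUnion N).card) (A : Finset π) :
    A.card ≤ (A.biUnion N).card +
      ∑ i ∈ A.image c, ((Finset.univ.filter fun x => c x = i).card - 2) := by
  let fib : ι → Finset π := fun i => Finset.univ.filter fun x => c x = i
  let miss : ι → ℕ := fun i => (Finset.univ.filter fun x => c x = i ∧ x ∉ A).card
  let F : Finset ι := {i ∈ A.image c | miss i ≤ 1}
  have hfib (i : ι) : (A.filter (c · = i)).card + miss i = (fib i).card := by
    have hA : A.filter (c · = i) = (fib i).filter (· ∈ A) := by
      ext x
      simp [fib, and_comm]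
    rw [hA, ← Finset.card_filter_add_card_filter_not (s := fib i) (· ∈ A)]
    simp only [miss, fib, Finset.filter_filter]
  calc A.card = ∑ i ∈ A.image c, (A.filter (c · = i)).card := A.card_eq_sum_card_image c
    _ ≤ ∑ i ∈ A.image c, (((fib i).card - 2) + if miss i ≤ 1 then 2 else 0) := by
        refine Finset.sum_le_sum fun i _ => ?_
        have := hfib i
        have := hc i
        simp only [fib] at *
        split_ifs <;> omega
    _ = 2 * F.card + ∑ i ∈ A.image c, ((fib i).card - 2) := by
        rw [Finset.sum_add_distrib, ← Finset.sum_filter, Finset.sum_const, smul_eq_mul]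
        ring
    _ ≤ (A.biUnion N).card + ∑ i ∈ A.image c, ((fib i).card - 2) := by
        gcongr
        exact hN A F fun i hi => (Finset.mem_filter.mp hi).2

theorem exists_pair_transversal [Fintype π] [DecidableEq π]
    (hc : ∀ i, 2 ≤ (Finset.univ.filter fun x => c x = i).card)
    (hN : ∀ (A : Finset π) (F : Finset ι),
      (∀ i ∈ F, (Finset.univ.filter fun x => c x = i ∧ x ∉ A).card ≤ 1) →
        2 * F.card ≤ (A.biUnion N).card) :
    ∃ (p : ι × Bool → π) (w : ι × Bool → α), p.Injective ∧ w.Injective ∧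
      (∀ z, c (p z) = z.1) ∧ ∀ z, w z ∈ N (p z) := by
  classical
  let fib : ι → Finset π := fun i => {x | c x = i}
  obtain ⟨f, hf, hfN, hfc⟩ := exists_partial_transversal (card_le_card_biUnion_add_sum hc hN)
  have hpair : ∀ i, ∃ q : Bool → π, q.Injective ∧ ∀ b, c (q b) = i ∧ ∃ a, f (q b) = some a := by
    intro i
    have hnone : ({x ∈ fib i | f x = none} : Finset π).card ≤ (fib i).card - 2 :=
      hfc i _ fun x hx => by simpa [fib] using hx
    have hsplit := Finset.card_filter_add_card_filter_not (s := fib i) (f · = none)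
    have h2 := hc i
    obtain ⟨x, hx, y, hy, hxy⟩ := Finset.one_lt_card.mp
      (show 1 < ({x ∈ fib i | ¬ f x = none} : Finset π).card by simp only [fib] at *; omega)
    simp only [fib, Finset.mem_filter, Finset.mem_univ, true_and,
      Option.ne_none_iff_exists'] at hx hy
    refine ⟨fun b => cond b x y, Bool.injective_iff.mpr hxy.symm, ?_⟩
    rintro (_ | _)
    exacts [hy, hx]
  choose q hq hqc w hw using hpair
  have hp : (fun z : ι × Bool => q z.1 z.2).Injective := by
    rintro ⟨i, b⟩ ⟨j, b'⟩ h
    obtain rfl : i = j := (hqc i b).symm.trans ((congrArg c h).trans (hqc j b'))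
    exact congrArg (Prod.mk i) (hq i h)
  refine ⟨fun z => q z.1 z.2, fun z => w z.1 z.2, hp, fun z z' h => hp (hf _ _ _ (hw z.1 z.2) ?_),
    fun z => hqc _ _, fun z => hfN _ _ (hw _ _)⟩
  rw [hw]
  exact congrArg some h.symm

end Transversal

namespace IsCliquePartition

variable [Fintype V] [DecidableEq V] {ι : Type*} {Z : Finset V} {Q : ι → Finset V} {t : ℝ}

theorem exists_exits_of_ports (h : IsCliquePartition G Z Q) (ht : IsTough t G) (h3 : 3 ≤ t)
    (hZ : t - 1 ≤ Zᶜ.card) {π : Type*} [Fintype π] [DecidableEq ι] {c : π → ι} {vert : π → V}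
    (hvert : ∀ x, vert x ∈ Q (c x)) (hsurj : ∀ i, ∀ v ∈ Q i, ∃ x, c x = i ∧ vert x = v)
    (hc : ∀ i, 2 ≤ (Finset.univ.filter fun x => c x = i).card) :
    ∃ (p : ι × Bool → π) (w : ι × Bool → V), p.Injective ∧ w.Injective ∧
      ∀ z, c (p z) = z.1 ∧ w z ∉ Z ∧ G.Adj (vert (p z)) (w z) := by
  classical
  obtain ⟨p, w, hp, hw, hpc, hwN⟩ :=
    exists_pair_transversal (N := fun x => outNeighbors G Z {vert x})
    hc fun A F hF => by
    have hX : (A.biUnion fun x => outNeighbors G Z {vert x}) = outNeighbors G Z (A.image vert) := by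
      ext y
      simp only [Finset.mem_biUnion, mem_outNeighbors, Finset.mem_singleton, Finset.mem_image]
      grind
    have hne : ∀ i ∈ F, (Q i ∩ A.image vert).Nonempty := fun i hi => by
      obtain ⟨x, hx, hxA⟩ := Finset.exists_mem_notMem_of_card_lt_card ((hF i hi).trans_lt (hc i))
      have hxi : c x = i := by simpa using hx
      have hxA : x ∈ A := by simpa [hxi] using hxA
      exact ⟨vert x, Finset.mem_inter.mpr ⟨hxi ▸ hvert x, Finset.mem_image_of_mem _ hxA⟩⟩
    have hcard : ∀ i ∈ F, (Q i \ A.image vert).card ≤ 1 := fun i hi => by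
      refine le_trans (Finset.card_le_card_of_surjOn vert fun v hv => ?_) (hF i hi)
      obtain ⟨hvi, hvA⟩ := Finset.mem_sdiff.mp hv
      obtain ⟨x, hxi, rfl⟩ := hsurj i v hvi
      refine ⟨x, ?_, rfl⟩
      simpa [hxi] using fun hxA => hvA (Finset.mem_image_of_mem vert hxA)
    have hHall := h.mul_card_le_card_outNeighbors ht hZ hne hcard
    have : (2 : ℝ) * F.card ≤ (t - 1) * F.card := by
      gcongr
      linarith
    rw [hX]
    exact_mod_cast this.trans hHall
  refine ⟨p, w, hp, hw, fun z => ⟨hpc z, ?_⟩⟩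
  simpa [mem_outNeighbors] using hwN z

theorem exists_exits [Finite ι] (h : IsCliquePartition G Z Q) (ht : IsTough t G) (h3 : 3 ≤ t)
    (hZ : t - 1 ≤ Zᶜ.card) :
    ∃ a w : ι × Bool → V, w.Injective ∧ (∀ z, a z ∈ Q z.1 ∧ w z ∉ Z ∧ G.Adj (a z) (w z)) ∧
      ∀ i, a (i, false) = a (i, true) → (Q i).card = 1 := by
  classical
  have := Fintype.ofFinite ι
  -- The vertex of a singleton clique has to serve as both of its exits, hence counts as two ports.
  let port : ι × V × Bool → Prop := fun x => x.2.1 ∈ Q x.1 ∧ (x.2.2 = true → (Q x.1).card = 1)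
  have hport (i : ι) : ∀ v ∈ Q i, port (i, v, false) := fun v hv => ⟨hv, nofun⟩
  obtain ⟨p, w, hp, hw, hpw⟩ := h.exists_exits_of_ports ht h3 hZ (π := {x // port x})
    (c := fun x => x.1.1) (vert := fun x => x.1.2.1) (fun x => x.2.1)
    (fun i v hv => ⟨⟨_, hport i v hv⟩, rfl, rfl⟩) fun i => by
      obtain ⟨x, y, hx, hy, hxi, hyi, hxy⟩ :
          ∃ x y, port x ∧ port y ∧ x.1 = i ∧ y.1 = i ∧ x ≠ y := by
        obtain ⟨v, hv⟩ := h.nonempty i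
        by_cases hi : (Q i).card = 1
        · exact ⟨_, (i, v, true), hport i v hv, ⟨hv, fun _ => hi⟩, rfl, rfl, by simp⟩
        · have hpos := (h.nonempty i).card_pos
          obtain ⟨u, hu, huv⟩ := Finset.exists_mem_ne (s := Q i) (by omega) v
          exact ⟨_, _, hport i u hu, hport i v hv, rfl, rfl, by simpa using huv⟩
      refine Finset.one_lt_card.mpr
          ⟨⟨x, hx⟩, ?_, ⟨y, hy⟩, ?_, fun h => hxy (congrArg Subtype.val h)⟩
      · simpa using hxi
      · simpa using hyi
  refine ⟨fun z => (p z).1.2.1, w, hw, fun z => ⟨(hpw z).1 ▸ (p z).2.1, (hpw z).2⟩, fun i hi => ?_⟩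
  by_contra hcard
  have hfalse : ∀ b, (p (i, b)).1.2.2 = false := fun b => by
    by_contra hb
    have := (p (i, b)).2.2 (by simpa using hb)
    rw [(hpw (i, b)).1] at this
    exact hcard this
  have heq : p (i, false) = p (i, true) :=
    Subtype.ext (Prod.ext ((hpw (i, false)).1.trans (hpw (i, true)).1.symm)
      (Prod.ext hi ((hfalse _).trans (hfalse _).symm)))
  simpa using hp heq

end IsCliquePartition

/-! ## Cycles through linked cliques -/

/-- `X` is the vertex set of a path of `G` from `u` to `v`. -/
def IsPathSet (G : SimpleGraph V) (X : Set V) (u v : V) : Prop :=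
  ∃ p : G.Walk u v, p.IsPath ∧ ∀ x, x ∈ p.support ↔ x ∈ X

/-- Whenever a set of forbidden vertices meets `A` in at most `N` vertices and contains neither `x`
nor `y`, some walk from `x` to `y` avoids it and stays in a vertex set meeting `A` in at most `c`
vertices. -/
def IsLinkable [DecidableEq V] (G : SimpleGraph V) (A : Finset V) (c N : ℕ) (x y : V) : Prop :=
  ∀ U : Finset V, x ∉ U → y ∉ U → (U ∩ A).card ≤ N →
    ∃ Y : Finset V, Disjoint Y U ∧ (Y ∩ A).card ≤ c ∧ ReachableIn G Y x y

namespace IsPathSet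

variable {X Y : Set V} {u v x y : V}

theorem left_mem (h : IsPathSet G X u v) : u ∈ X :=
  let ⟨p, _, hp⟩ := h
  (hp u).mp p.start_mem_support

theorem append (hX : IsPathSet G X u v) (hvx : G.Adj v x) (hY : IsPathSet G Y x y)
    (hXY : Disjoint X Y) : IsPathSet G (X ∪ Y) u y := by
  obtain ⟨p, hp, hpX⟩ := hX
  obtain ⟨q, hq, hqY⟩ := hY
  refine ⟨p.append (.cons hvx q), isPath_append_cons hp hq hvx fun z hz hz' => ?_, fun z => ?_⟩
  · exact Set.disjoint_left.mp hXY ((hpX z).mp hz) ((hqY z).mp hz')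
  · rw [mem_support_append_cons, hpX, hqY, Set.mem_union]

theorem isCycleSet (h : IsPathSet G X u v) (hvu : G.Adj v u) (hx : x ∈ X) (hxu : x ≠ u)
    (hxv : x ≠ v) : IsCycleSet G X := by
  obtain ⟨p, hp, hpX⟩ := h
  rw [show X = {x | x ∈ p.support} from Set.ext fun z => (hpX z).symm]
  refine isCycleSet_support hp hvu ?_
  replace hx := (hpX x).mpr hx
  cases p with
  | nil => exact absurd (by simpa using hx) hxu
  | cons huw q =>
    cases q with
    | nil => exact absurd (by simpa using hx) (not_or.mpr ⟨hxu, hxv⟩)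
    | cons _ _ => simp

theorem iUnion : ∀ {k : ℕ} {P : Fin (k + 1) → Set V} {s e : Fin (k + 1) → V},
    (∀ i, IsPathSet G (P i) (s i) (e i)) → Pairwise (Function.onFun Disjoint P) →
      (∀ i : Fin k, G.Adj (e i.castSucc) (s i.succ)) →
        IsPathSet G (⋃ i, P i) (s 0) (e (Fin.last k))
  | 0, P, s, e, hP, _, _ => by
    have hunion : ⋃ i, P i = P 0 := by
      ext x
      simp [Fin.exists_fin_one]
    exact hunion ▸ hP 0
  | k + 1, P, s, e, hP, hdisj, hadj => by
    have hunion : ⋃ i, P i = (⋃ i : Fin (k + 1), P i.castSucc) ∪ P (Fin.last (k + 1)) := by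
      ext x
      simp [Fin.exists_fin_succ']
    rw [hunion]
    refine (iUnion (fun i => hP i.castSucc) (fun i j hij => hdisj ?_) fun i => ?_).append
      (hadj (Fin.last k)) (hP _) (Set.disjoint_iUnion_left.mpr fun i => hdisj ?_)
    · exact (Fin.castSucc_injective _).ne hij
    · exact hadj i.castSucc
    · exact (Fin.castSucc_lt_last i).ne

end IsPathSet

theorem ReachableIn.exists_isPathSet {s : Set V} {u v : V} (h : ReachableIn G s u v) :
    ∃ X ⊆ s, IsPathSet G X u v :=
  let ⟨p, hp, hps⟩ := h.exists_isPath
  ⟨{x | x ∈ p.support}, hps, p, hp, fun _ => .rfl⟩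

theorem isPathSet_of_isClique {M : Finset V} (hM : G.IsClique M) {u v : V}
    (hu : u ∈ M) (hv : v ∈ M) (huv : u = v → M.card = 1) : IsPathSet G M u v := by
  classical
  induction M using Finset.strongInduction generalizing u with
  | H M ih =>
    by_cases heq : u = v
    · subst heq
      obtain ⟨x, rfl⟩ := Finset.card_eq_one.mp (huv rfl)
      obtain rfl := Finset.mem_singleton.mp hu
      exact ⟨.nil, .nil, by simp⟩
    have hvM : v ∈ M.erase u := Finset.mem_erase.mpr ⟨Ne.symm heq, hv⟩
    obtain ⟨x, hx, hxv⟩ : ∃ x ∈ M.erase u, x = v → (M.erase u).card = 1 := by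
      by_cases hcard : (M.erase u).card = 1
      · exact ⟨v, hvM, fun _ => hcard⟩
      · have hpos : 0 < (M.erase u).card := Finset.card_pos.mpr ⟨v, hvM⟩
        obtain ⟨x, hx, hxv⟩ := Finset.exists_mem_ne (s := M.erase u) (by omega) v
        exact ⟨x, hx, fun h => absurd h hxv⟩
    have hux : G.Adj u x :=
      hM hu (Finset.mem_of_mem_erase hx) (Finset.ne_of_mem_erase hx).symm
    have hrest := ih _ (Finset.erase_ssubset hu)
      (hM.subset (Finset.coe_subset.mpr (Finset.erase_subset u M))) hx hvM hxv
    have hsingle : IsPathSet G {u} u u := ⟨.nil, .nil, by simp⟩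
    have := hsingle.append hux hrest (by simp)
    rwa [← Finset.coe_singleton, ← Finset.coe_union, ← Finset.insert_eq,
      Finset.insert_erase hu] at this

section Links

variable [DecidableEq V] {κ : Type*} {A B : Finset V} {c N : ℕ} {x y : κ → V}

/-- The sets `Y i ∋ x i, y i` are pairwise disjoint and avoid `B`, and each of them has at most `c`
vertices in `A`: a stage in the construction of disjoint walks from `x i` to `y i`. -/
structure IsLinkFamily (A B : Finset V) (c : ℕ) (x y : κ → V) (Y : κ → Finset V) : Prop where
  left_mem : ∀ i, x i ∈ Y i
  right_mem : ∀ i, y i ∈ Y i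
  card_le : ∀ i, (Y i ∩ A).card ≤ c
  disjoint : ∀ i, Disjoint (Y i) B
  pairwise : Pairwise (Function.onFun Disjoint Y)

theorem IsLinkFamily.exists_update [Fintype κ] [DecidableEq κ] {Y : κ → Finset V}
    (hY : IsLinkFamily A B c x y Y) {i : κ} (hlink : IsLinkable G A c N (x i) (y i))
    (hN : (B ∩ A).card + c * Fintype.card κ ≤ N + c) :
    ∃ Z : Finset V, ReachableIn G Z (x i) (y i) ∧
      IsLinkFamily A B c x y (Function.update Y i Z) := by
  let U : Finset V := B ∪ (Finset.univ.erase i).biUnion Y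
  have hmemU : ∀ v ∈ Y i, v ∉ U := fun v hv hvU => by
    rcases Finset.mem_union.mp hvU with hvB | hvY
    · exact Finset.disjoint_left.mp (hY.disjoint i) hv hvB
    · obtain ⟨j, hj, hvj⟩ := Finset.mem_biUnion.mp hvY
      exact Finset.disjoint_left.mp (hY.pairwise (Finset.ne_of_mem_erase hj).symm) hv hvj
  have hU : (U ∩ A).card ≤ N := by
    have hcard := Finset.card_biUnion_le_card_mul (Finset.univ.erase i) (fun j => Y j ∩ A) c
      fun j _ => hY.card_le j
    have hsucc : (Finset.univ.erase i).card + 1 = Fintype.card κ :=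
      Finset.card_erase_add_one (Finset.mem_univ i)
    rw [← hsucc] at hN
    rw [Finset.union_inter_distrib_right, Finset.biUnion_inter]
    have := Finset.card_union_le (B ∩ A) ((Finset.univ.erase i).biUnion fun j => Y j ∩ A)
    linarith
  obtain ⟨Z, hZU, hZc, hZ⟩ :=
    hlink U (hmemU _ (hY.left_mem i)) (hmemU _ (hY.right_mem i)) hU
  have hZY : ∀ j, j ≠ i → Disjoint Z (Y j) := fun j hj => hZU.mono_right fun v hv =>
    Finset.mem_union_right _ (Finset.mem_biUnion.mpr ⟨j, by simp [hj], hv⟩)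
  refine ⟨Z, hZ, ⟨fun j => ?_, fun j => ?_, fun j => ?_, fun j => ?_, fun j l hjl => ?_⟩⟩
  · rcases eq_or_ne j i with rfl | hj
    · simpa using hZ.symm.right_mem
    · simpa [hj] using hY.left_mem j
  · rcases eq_or_ne j i with rfl | hj
    · simpa using hZ.right_mem
    · simpa [hj] using hY.right_mem j
  · rcases eq_or_ne j i with rfl | hj
    · simpa using hZc
    · simpa [hj] using hY.card_le j
  · rcases eq_or_ne j i with rfl | hj
    · simpa using hZU.mono_right Finset.subset_union_left
    · simpa [hj] using hY.disjoint j
  · rcases eq_or_ne j i with rfl | hj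
    · simpa [Function.onFun, hjl.symm] using hZY l hjl.symm
    rcases eq_or_ne l i with rfl | hl
    · simpa [Function.onFun, hjl] using (hZY j hjl).symm
    · simpa [Function.onFun, hj, hl] using hY.pairwise hjl

theorem exists_disjoint_links [Fintype κ] (hlink : ∀ i, IsLinkable G A c N (x i) (y i))
    (hB : ∀ i, x i ∉ B ∧ y i ∉ B)
    (hdisj : Pairwise (Function.onFun Disjoint fun i => ({x i, y i} : Finset V)))
    (hN : (B ∩ A).card + c * Fintype.card κ ≤ N + c) :
    ∃ Y : κ → Finset V, (∀ i, Disjoint (Y i) B) ∧ Pairwise (Function.onFun Disjoint Y) ∧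
      ∀ i, ReachableIn G (Y i) (x i) (y i) := by
  classical
  suffices key : ∀ s : Finset κ, ∃ Y : κ → Finset V, IsLinkFamily A B c x y Y ∧
      ∀ i ∈ s, ReachableIn G (Y i) (x i) (y i) by
    obtain ⟨Y, hY, hreach⟩ := key Finset.univ
    exact ⟨Y, hY.disjoint, hY.pairwise, fun i => hreach i (Finset.mem_univ i)⟩
  intro s
  induction s using Finset.induction_on with
  | empty =>
    refine ⟨fun i => {x i, y i}, ⟨by simp, by simp, fun i => ?_, by simpa using hB, hdisj⟩, by simp⟩
    obtain ⟨Y, -, hYc, hreach⟩ := hlink i ∅ (by simp) (by simp) (by simp)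
    refine (Finset.card_le_card (Finset.inter_subset_inter_right ?_)).trans hYc
    simpa [Finset.insert_subset_iff] using ⟨hreach.symm.right_mem, hreach.right_mem⟩
  | insert i s his ih =>
    obtain ⟨Y, hY, hreach⟩ := ih
    obtain ⟨Z, hZ, hYZ⟩ := hY.exists_update (hlink i) hN
    refine ⟨_, hYZ, Finset.forall_mem_insert _ _ _ |>.mpr ⟨by simpa using hZ, fun j hj => ?_⟩⟩
    rw [Function.update_of_ne (ne_of_mem_of_not_mem hj his)]
    exact hreach j hj

end Links

theorem card_image_inter_le_sum_min [DecidableEq V] {ι : Type*} [Fintype ι] {Q : ι → Finset V}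
    {A : Finset V} {a : ι × Bool → V} (ha : ∀ z, a z ∈ Q z.1) :
    (Finset.univ.image a ∩ A).card ≤ ∑ i, min 2 (Q i ∩ A).card := by
  have hsub : Finset.univ.image a ∩ A ⊆
      Finset.univ.biUnion fun i => {a (i, false), a (i, true)} ∩ A := fun v hv => by
    simp only [Finset.mem_inter, Finset.mem_image, Finset.mem_univ, true_and] at hv
    obtain ⟨⟨⟨i, b⟩, rfl⟩, hvA⟩ := hv
    exact Finset.mem_biUnion.mpr ⟨i, Finset.mem_univ i, by cases b <;> simp [hvA]⟩
  refine (Finset.card_le_card hsub).trans <| Finset.card_biUnion_le.trans <|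
    Finset.sum_le_sum fun i _ => le_min ?_ (Finset.card_le_card ?_)
  · exact (Finset.card_le_card Finset.inter_subset_left).trans Finset.card_le_two
  · exact Finset.inter_subset_inter_right
      (Finset.insert_subset (ha _) (Finset.singleton_subset_iff.mpr (ha _)))

namespace IsCliquePartition

variable {Z A : Finset V} {k : ℕ} {Q : Fin (k + 1) → Finset V}
  {a w : Fin (k + 1) × Bool → V}

theorem exists_isCycleSet_of_isPathSet (h : IsCliquePartition G Z Q) (hw : w.Injective)
    (haw : ∀ z, a z ∈ Q z.1 ∧ w z ∉ Z ∧ G.Adj (a z) (w z))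
    (ha : ∀ i, a (i, false) = a (i, true) → (Q i).card = 1) {X : Fin (k + 1) → Set V}
    (hX : ∀ i, IsPathSet G (X i) (w (i, true)) (w (i + 1, false)))
    (hXX : Pairwise (Function.onFun Disjoint X)) (hXa : ∀ i z, a z ∉ X i) :
    ∃ Y, IsCycleSet G Y ∧ ↑Z ⊆ Y := by
  classical
  let M : Fin (k + 1) → Finset V := fun i => {v ∈ Q i | ∀ j, v ∉ X j}
  have haM (i b) : a (i, b) ∈ M i := Finset.mem_filter.mpr ⟨(haw _).1, fun j => hXa j _⟩
  have hM (i) : IsPathSet G (M i) (a (i, false)) (a (i, true)) := by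
    have hsub : M i ⊆ Q i := Finset.filter_subset _ _
    refine isPathSet_of_isClique ((h.isClique i).subset hsub) (haM i _) (haM i _) fun hi => ?_
    have hpos := Finset.card_pos.mpr ⟨_, haM i true⟩
    have hle := Finset.card_le_card hsub
    have := ha i hi
    omega
  have hMX (i j) : Disjoint (M i : Set V) (X j) :=
    Set.disjoint_left.mpr fun v hv => (Finset.mem_filter.mp hv).2 j
  have hMM (i j) (hij : i ≠ j) : Disjoint (M i : Set V) (M j) :=
    Set.disjoint_left.mpr fun v hvi hvj =>
      hij (h.eq_of_mem (Finset.mem_filter.mp hvi).1 (Finset.mem_filter.mp hvj).1)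
  have hpath := IsPathSet.iUnion (P := fun i => (M i : Set V) ∪ X i)
    (fun i => (hM i).append (haw _).2.2 (hX i) (hMX i i))
    (fun i j hij => by
      simpa only [Function.onFun, Set.disjoint_union_left, Set.disjoint_union_right] using
        ⟨⟨hMM i j hij, (hMX j i).symm⟩, hMX i j, hXX hij⟩)
    fun i => by simpa using (haw (i.succ, false)).2.2.symm
  rw [Fin.last_add_one] at hpath
  refine ⟨_, hpath.isCycleSet (haw _).2.2.symm
    (Set.mem_iUnion.mpr ⟨0, .inr (hX 0).left_mem⟩) (fun h0 => ?_) (hw.ne (by simp)), fun v hv => ?_⟩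
  · exact (haw (0, true)).2.1 ((h.mem_iff _).mpr ⟨0, h0 ▸ (haw (0, false)).1⟩)
  · obtain ⟨i, hi⟩ := (h.mem_iff v).mp hv
    by_cases hvX : ∃ j, v ∈ X j
    · exact Set.mem_iUnion.mpr (hvX.imp fun j => .inr)
    · exact Set.mem_iUnion.mpr ⟨i, .inl (Finset.mem_filter.mpr ⟨hi, not_exists.mp hvX⟩)⟩

theorem exists_isCycleSet_of_isLinkable [Fintype V] [DecidableEq V] {t : ℝ} {c N : ℕ}
    (h : IsCliquePartition G Z Q) (ht : IsTough t G) (h3 : 3 ≤ t) (hZ : t - 1 ≤ Zᶜ.card)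
    (hN : c * k + ∑ i, min 2 (Q i ∩ A).card ≤ N)
    (hlink : ∀ x ∉ Z, ∀ y ∉ Z, x ≠ y → (∃ z ∈ Z, G.Adj z x) → (∃ z ∈ Z, G.Adj z y) →
      IsLinkable G A c N x y) :
    ∃ X, IsCycleSet G X ∧ ↑Z ⊆ X := by
  obtain ⟨a, w, hw, haw, ha⟩ := h.exists_exits ht h3 hZ
  have haZ (z) : a z ∈ Z := (h.mem_iff _).mpr ⟨_, (haw z).1⟩
  have hwB (z) : w z ∉ Finset.univ.image a := fun hz => by
    obtain ⟨z', -, hz'⟩ := Finset.mem_image.mp hz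
    exact (haw z).2.1 (hz' ▸ haZ z')
  obtain ⟨Y, hYB, hYY, hY⟩ := exists_disjoint_links (A := A) (B := Finset.univ.image a)
    (x := fun i => w (i, true)) (y := fun i => w (i + 1, false))
    (fun i => hlink _ (haw _).2.1 _ (haw _).2.1 (hw.ne (by simp))
      ⟨_, haZ _, (haw _).2.2⟩ ⟨_, haZ _, (haw _).2.2⟩)
    (fun i => ⟨hwB _, hwB _⟩)
    (fun i j hij => by simp [Function.onFun, hw.eq_iff, hij.symm])
    (by
      have := card_image_inter_le_sum_min (A := A) fun z => (haw z).1
      rw [Fintype.card_fin, mul_add_one]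
      omega)
  choose X hXY hX using fun i => (hY i).exists_isPathSet
  refine h.exists_isCycleSet_of_isPathSet hw haw ha hX (fun i j hij => ?_) fun i z hz => ?_
  · exact (Finset.disjoint_coe.mpr (hYY hij)).mono (hXY i) (hXY j)
  · exact Finset.disjoint_left.mp (hYB i) (hXY i hz) (Finset.mem_image_of_mem a (Finset.mem_univ z))

end IsCliquePartition

/-! ## Vertices far from a clique -/

section FarSet

variable [Fintype V] {K U : Finset V} {t : ℝ} {v : V}

open Classical in
/-- The vertices outside `K` that are adjacent to at most `(|K| - 2) / 3` vertices of `K`, so that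
any three of them have two common non-neighbours in `K`. -/
noncomputable def farSet (G : SimpleGraph V) (K : Finset V) : Finset V :=
  {v | v ∉ K ∧ 3 * (K.filter (G.Adj v)).card + 2 ≤ K.card}

theorem mem_farSet [DecidableRel G.Adj] :
    v ∈ farSet G K ↔ v ∉ K ∧ 3 * (K.filter (G.Adj v)).card + 2 ≤ K.card := by
  simp only [farSet, Finset.mem_filter_univ]
  congr!

theorem notMem_of_mem_farSet (hv : v ∈ farSet G K) : v ∉ K := by
  classical
  exact (mem_farSet.mp hv).1

theorem P2P3Free.isClusterOn_farSet (hfree : P2P3Free G) (hK : G.IsClique K) :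
    IsClusterOn G (farSet G K : Set V) := by
  classical
  intro a b c ha hb hc hab hbc hac
  rw [Finset.mem_coe, mem_farSet] at ha hb hc
  let N : Finset V := K.filter (G.Adj a) ∪ K.filter (G.Adj b) ∪ K.filter (G.Adj c)
  have hN : N.card + 2 ≤ K.card := by
    dsimp only [N]
    have h1 := Finset.card_union_le (K.filter (G.Adj a) ∪ K.filter (G.Adj b)) (K.filter (G.Adj c))
    have h2 := Finset.card_union_le (K.filter (G.Adj a)) (K.filter (G.Adj b))
    omega
  have hKN : 1 < (K \ N).card := by
    have := Finset.le_card_sdiff N K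
    omega
  by_contra hac'
  refine hKN.not_ge (hfree.card_le_one_of_isClique
    (hK.subset (Finset.coe_subset.mpr Finset.sdiff_subset)) hab hbc hac hac' fun p hp => ?_)
  simp only [N, Finset.mem_sdiff, Finset.mem_union, Finset.mem_filter, not_or, not_and] at hp
  obtain ⟨hpK, ⟨hap, hbp⟩, hcp⟩ := hp
  exact ⟨fun h => hap hpK h.symm, fun h => hbp hpK h.symm, fun h => hcp hpK h.symm⟩

theorem exists_mem_eq_or_adj_of_notMem_farSet [DecidableEq V] (hv : v ∉ farSet G K) (hvU : v ∉ U)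
    (hU : 3 * (U ∩ K).card + 2 ≤ K.card) :
    ∃ a ∈ K, a ∉ U ∧ (v = a ∨ v ∉ K ∧ G.Adj v a) := by
  classical
  by_cases hvK : v ∈ K
  · exact ⟨v, hvK, hvU, .inl rfl⟩
  have hcard : (U ∩ K).card < (K.filter (G.Adj v)).card := by
    by_contra! hle
    exact hv (mem_farSet.mpr ⟨hvK, by omega⟩)
  obtain ⟨a, ha, haU⟩ := Finset.exists_mem_notMem_of_card_lt_card hcard
  obtain ⟨haK, hva⟩ := Finset.mem_filter.mp ha
  exact ⟨a, haK, fun h => haU (Finset.mem_inter.mpr ⟨h, haK⟩), .inr ⟨hvK, hva⟩⟩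

theorem isLinkable_of_notMem_farSet [DecidableEq V] (hK : G.IsClique K) {N : ℕ}
    (hN : 3 * N + 2 ≤ K.card) {x y : V}
    (hx : x ∉ farSet G K) (hy : y ∉ farSet G K) : IsLinkable G K 2 N x y := by
  intro U hxU hyU hU
  obtain ⟨a, haK, haU, hxa⟩ := exists_mem_eq_or_adj_of_notMem_farSet hx hxU (by omega)
  obtain ⟨b, hbK, hbU, hyb⟩ := exists_mem_eq_or_adj_of_notMem_farSet hy hyU (by omega)
  have hreach {p q : V} {s : Set V} (hp : p ∈ s) (hq : q ∈ s) (hpq : p = q ∨ G.Adj p q) :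
      ReachableIn G s p q := by
    rcases hpq with rfl | hpq
    · exact .refl hp
    · exact .of_adj hp hq hpq
  refine ⟨{x, a, b, y}, ?_, ?_, ?_⟩
  · simp [hxU, haU, hbU, hyU]
  · refine (Finset.card_le_card (t := {a, b}) fun z hz => ?_).trans Finset.card_le_two
    grind
  · have hab : a = b ∨ G.Adj a b := or_iff_not_imp_left.mpr (hK haK hbK)
    exact ((hreach (by simp) (by simp) (hxa.imp_right And.right)).trans
      (hreach (by simp) (by simp) hab)).trans
      (hreach (by simp) (by simp) (hyb.imp_right And.right)).symm

theorem IsCliquePartition.exists_isCycleSet_farSet {k : ℕ} {Q : Fin (k + 1) → Finset V}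
    (h : IsCliquePartition G (farSet G K) Q) (ht : IsTough t G) (h3 : 3 ≤ t) (hK : G.IsClique K)
    (htK : t - 1 ≤ K.card) (hk : 6 * (k + 1) ≤ K.card + 4) :
    ∃ X, IsCycleSet G X ∧ ↑(farSet G K) ⊆ X := by
  classical
  have hdisj : Disjoint (farSet G K) K := Finset.disjoint_left.mpr fun _ => notMem_of_mem_farSet
  refine h.exists_isCycleSet_of_isLinkable (A := K) (c := 2) (N := 2 * k) ht h3 ?_ ?_
    fun x hx y hy _ _ _ => isLinkable_of_notMem_farSet hK (by omega) hx hy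
  · refine htK.trans (Nat.cast_le.mpr (Finset.card_le_card ?_))
    exact Finset.subset_compl_iff_disjoint_left.mpr hdisj
  · simp [Finset.disjoint_iff_inter_eq_empty.mp (hdisj.mono_left (h.subset _))]

end FarSet

/-! ## Vertices of low degree -/

section LowVertices

variable [Fintype V] {K : Finset V} {v : V}

theorem card_filter_adj_le_degree [DecidableRel G.Adj] (K : Finset V) :
    (K.filter (G.Adj v)).card ≤ G.degree v :=
  Finset.card_le_card fun x hx => (G.mem_neighborFinset v x).mpr (Finset.mem_filter.mp hx).2

theorem mem_farSet_of_degree_le (hK : G.IsClique K) [Fintype (G.neighborSet v)]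
    (hv : 3 * G.degree v + 2 ≤ K.card) : v ∈ farSet G K := by
  classical
  have hle : (K.filter (G.Adj v)).card ≤ G.degree v := by
    convert card_filter_adj_le_degree K
  refine mem_farSet.mpr ⟨fun hvK => ?_, by omega⟩
  have herase : K.erase v ⊆ G.neighborFinset v := fun x hx =>
    (G.mem_neighborFinset v x).mpr
      (hK hvK (Finset.mem_of_mem_erase hx) (Finset.ne_of_mem_erase hx).symm)
  have hcard : (K.erase v).card ≤ G.degree v := Finset.card_le_card herase
  have := Finset.card_erase_add_one hvK
  omega

open Classical in
/-- The vertices of degree at most `|V| / 16 - 1`; a maximal cycle through all of them is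
Hamiltonian in a 15-tough `(P₂ ∪ P₃)`-free graph. -/
noncomputable def lowVertices (G : SimpleGraph V) : Finset V :=
  {v | 16 * (G.degree v + 1) ≤ Fintype.card V}

theorem mem_lowVertices [Fintype (G.neighborSet v)] :
    v ∈ lowVertices G ↔ 16 * (G.degree v + 1) ≤ Fintype.card V := by
  simp only [lowVertices, Finset.mem_filter_univ]
  congr!

theorem IsTough.le_card_of_nonempty_lowVertices (ht : IsTough 15 G)
    (hL : (lowVertices G).Nonempty) :
    496 ≤ Fintype.card V := by
  classical
  obtain ⟨v, hv⟩ := hL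
  rw [mem_lowVertices] at hv
  have hdeg := ht.two_mul_le_degree (v := v) (by omega)
  have : 30 ≤ G.degree v := by
    norm_num at hdeg
    exact_mod_cast hdeg
  omega

theorem exists_isCycleSet_lowVertices_of_card_cliques_le (hfree : P2P3Free G) (ht : IsTough 15 G)
    (hL : (lowVertices G).Nonempty) (hK : G.IsClique K) (hcard : 3 * Fintype.card V ≤ 16 * K.card)
    (hfar : ∀ {k : ℕ} {Q : Fin (k + 1) → Finset V}, IsCliquePartition G (farSet G K) Q →
      6 * (k + 1) ≤ K.card + 4) :
    ∃ X, IsCycleSet G X ∧ ↑(lowVertices G) ⊆ X := by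
  classical
  have hn := ht.le_card_of_nonempty_lowVertices hL
  have hsub : lowVertices G ⊆ farSet G K := fun v hv => by
    rw [mem_lowVertices] at hv
    exact mem_farSet_of_degree_le hK (by omega)
  obtain ⟨k, Q, h⟩ := (hfree.isClusterOn_farSet hK).exists_isCliquePartition (hL.mono hsub)
  have h14 : (14 : ℝ) ≤ K.card := by
    have : 14 ≤ K.card := by omega
    exact_mod_cast this
  obtain ⟨X, hX, hfarX⟩ :=
    h.exists_isCycleSet_farSet ht (by norm_num) hK (by linarith) (hfar h)
  exact ⟨X, hX, (Finset.coe_subset.mpr hsub).trans hfarX⟩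

theorem exists_isCycleSet_lowVertices_of_isClique (hfree : P2P3Free G) (ht : IsTough 15 G)
    (hL : (lowVertices G).Nonempty) (hK : G.IsClique K)
    (hcard : 6 * Fintype.card V ≤ 16 * K.card) :
    ∃ X, IsCycleSet G X ∧ ↑(lowVertices G) ⊆ X := by
  refine exists_isCycleSet_lowVertices_of_card_cliques_le hfree ht hL hK (by omega)
    fun {k Q} h => ?_
  classical
  have hn := ht.le_card_of_nonempty_lowVertices hL
  rcases Nat.eq_zero_or_pos k with rfl | hk
  · omega
  · have hle := h.add_one_mul_card_le ht (by simp; omega)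
    rw [Fintype.card_fin] at hle
    have : 16 * (k + 1) ≤ Fintype.card V := by
      norm_num at hle
      exact_mod_cast hle
    omega

theorem P2P3Free.not_adj_of_mem_farSet (hfree : P2P3Free G) (hK : G.IsClique K) {p u v z : V}
    (huv : G.Adj u v) (hu : ∀ z ∈ K, ¬G.Adj u z) (hv : ∀ z ∈ K, ¬G.Adj v z) (hp : p ∈ farSet G K)
    (hup : ¬G.Adj u p) (hvp : ¬G.Adj v p) (hz : z ∈ K) : ¬G.Adj p z := by
  classical
  intro hpz
  have hpK := notMem_of_mem_farSet hp
  rw [mem_farSet] at hp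
  obtain ⟨q, hqK, hq⟩ : ∃ q ∈ K, q ∉ K.filter (G.Adj p) :=
    Finset.exists_mem_notMem_of_card_lt_card (by omega)
  have hpq : ¬G.Adj p q := fun h => hq (Finset.mem_filter.mpr ⟨hqK, h⟩)
  have hzq : G.Adj z q := hK hz hqK (fun h => hpq (h ▸ hpz))
  exact hpq (hfree.isClusterOn_nonneighbors huv ⟨hup, hvp⟩ ⟨hu z hz, hv z hz⟩ ⟨hu q hqK, hv q hqK⟩
    hpz hzq (ne_of_mem_of_not_mem hqK hpK).symm)

namespace IsCliquePartition

variable [DecidableEq V] {C : Finset V} {ι : Type*} {Q : ι → Finset V}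

theorem mem_farSet_of_mem_sdiff (h : IsCliquePartition G C Q) {i : ι} (hi : 2 ≤ (Q i).card)
    (hv : v ∈ C \ Q i) : v ∈ farSet G (Q i) := by
  classical
  rw [mem_farSet, Finset.filter_eq_empty_iff.mpr fun z => h.not_adj_of_mem_sdiff hv]
  exact ⟨(Finset.mem_sdiff.mp hv).2, by simpa using hi⟩

theorem mem_of_adj_farSet (h : IsCliquePartition G C Q) (hfree : P2P3Free G) {i : ι}
    (hi : 2 ≤ (Q i).card) {u v : V} (hu : u ∈ C \ Q i) (hv : v ∈ C \ Q i) (huv : G.Adj u v)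
    {κ : Type*} {P : κ → Finset V} (hP : IsCliquePartition G (farSet G (Q i)) P) {j l : κ}
    (huj : u ∈ P j) (hjl : j ≠ l) {x y : V} (hx : x ∈ P l) (hxy : G.Adj x y)
    (hy : y ∈ C ∨ y ∈ farSet G (Q i)) : y ∈ P l := by
  have hvj : v ∈ P j := hP.mem_of_adj huj huv (h.mem_farSet_of_mem_sdiff hi hv)
  have hanti {w : V} (hw : w ∈ P j) : ¬G.Adj w x := fun hwx => hjl (hP.eq_of_adj hw hx hwx)
  refine hP.mem_of_adj hx hxy (hy.elim (fun hyC => ?_) id)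
  refine h.mem_farSet_of_mem_sdiff hi (Finset.mem_sdiff.mpr ⟨hyC, fun hyi => ?_⟩)
  exact hfree.not_adj_of_mem_farSet (h.isClique i) huv (fun z => h.not_adj_of_mem_sdiff hu)
    (fun z => h.not_adj_of_mem_sdiff hv) (hP.subset l hx) (hanti huj) (hanti hvj) hyi hxy

theorem mul_card_le_of_farSet (h : IsCliquePartition G C Q) (hfree : P2P3Free G) {t : ℝ}
    (ht : IsTough t G) {i : ι} (hi : 2 ≤ (Q i).card) {u v : V} (hu : u ∈ C \ Q i)
    (hv : v ∈ C \ Q i) (huv : G.Adj u v) {κ : Type*} [Fintype κ] {P : κ → Finset V}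
    (hP : IsCliquePartition G (farSet G (Q i)) P) (hκ : 2 ≤ Fintype.card κ) :
    t * Fintype.card κ ≤ Cᶜ.card := by
  classical
  have huF := h.mem_farSet_of_mem_sdiff hi hu
  obtain ⟨j, huj⟩ := (hP.mem_iff u).mp huF
  have hcard := Finset.card_erase_add_one (Finset.mem_univ j)
  rw [Finset.card_univ] at hcard
  rw [← hcard, Nat.cast_succ]
  have hle : t * ((Finset.univ.erase j).card + 1) ≤ (Cᶜ \ farSet G (Q i)).card :=
    ht.mul_card_add_one_le (P := fun l => P l) (w := u) (Finset.card_pos.mp (by omega))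
      (fun l _ => hP.nonempty l)
      (fun l _ z hz hzS => (Finset.mem_sdiff.mp hzS).2 (hP.subset l hz))
      (fun _ _ _ _ _ hz hz' => hP.eq_of_mem hz hz')
      (fun l hl x hx y hyS hxy => h.mem_of_adj_farSet hfree hi hu hv huv hP huj
        (Finset.ne_of_mem_erase hl).symm hx hxy (by simpa [or_iff_not_imp_left] using hyS))
      (fun huS => (Finset.mem_sdiff.mp huS).2 huF)
      (fun l hl hul => Finset.ne_of_mem_erase hl (hP.eq_of_mem hul huj))
  exact hle.trans (by exact_mod_cast Finset.card_le_card Finset.sdiff_subset)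

theorem exists_isCycleSet_lowVertices_of_card_le (h : IsCliquePartition G C Q)
    (hfree : P2P3Free G) (ht : IsTough 15 G) (hL : (lowVertices G).Nonempty)
    (hC : 16 * Cᶜ.card ≤ 7 * Fintype.card V) {i : ι}
    (hi : 3 * Fintype.card V ≤ 16 * (Q i).card) :
    ∃ X, IsCycleSet G X ∧ ↑(lowVertices G) ⊆ X := by
  have := h.finite
  have := Fintype.ofFinite ι
  have hn := ht.le_card_of_nonempty_lowVertices hL
  rcases le_or_gt (6 * Fintype.card V) (16 * (Q i).card) with hi6 | hi6
  · exact exists_isCycleSet_lowVertices_of_isClique hfree ht hL (h.isClique i) hi6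
  refine exists_isCycleSet_lowVertices_of_card_cliques_le hfree ht hL (h.isClique i) hi
    fun {k P} hP => ?_
  have hι : Fintype.card ι < (C \ Q i).card := by
    have hCcard := Finset.card_add_card_compl C
    have hsdiff := Finset.le_card_sdiff (Q i) C
    have : 2 ≤ Fintype.card ι → 15 * Fintype.card ι ≤ Cᶜ.card := fun h2 => by
      exact_mod_cast h.mul_card_le_card_compl ht h2
    omega
  obtain ⟨u, hu, v, hv, huv⟩ := h.exists_adj_of_card_lt Finset.sdiff_subset hι
  rcases Nat.eq_zero_or_pos k with rfl | hk
  · omega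
  · have hle := h.mul_card_le_of_farSet hfree ht (by omega) hu hv huv hP (by simp; omega)
    rw [Fintype.card_fin] at hle
    have : 15 * (k + 1) ≤ Cᶜ.card := by exact_mod_cast hle
    omega

end IsCliquePartition

end LowVertices

/-! ## Traces on a clique partition -/

section Trace

variable {C : Finset V} {ι : Type*} {Q : ι → Finset V} {u v w x y : V}

open Classical in
/-- The closed neighbourhood of `v` within `C`. -/
noncomputable def closedTrace (G : SimpleGraph V) (C : Finset V) (v : V) : Finset V :=
  {w ∈ C | v = w ∨ G.Adj v w}

theorem mem_closedTrace : w ∈ closedTrace G C v ↔ w ∈ C ∧ (v = w ∨ G.Adj v w) := by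
  simp [closedTrace]

theorem not_adj_of_closedTrace_subset {i : ι} (hv : closedTrace G C v ⊆ Q i) (hu : u ∈ C)
    (hui : u ∉ Q i) : ¬G.Adj u v := fun huv =>
  hui (hv (mem_closedTrace.mpr ⟨hu, .inr huv.symm⟩))

theorem IsCliquePartition.closedTrace_subset_of_adj [DecidableEq V] (h : IsCliquePartition G C Q)
    (hfree : P2P3Free G)
    (hedge : ∀ i j, ∃ u ∈ C \ (Q i ∪ Q j), ∃ v ∈ C \ (Q i ∪ Q j), G.Adj u v)
    {i j : ι} (hx : closedTrace G C x ⊆ Q i) (hy : closedTrace G C y ⊆ Q j) (hxy : G.Adj x y) :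
    closedTrace G C x ⊆ closedTrace G C y := by
  intro z hz
  have hzi := hx hz
  obtain ⟨hzC, hxz⟩ := mem_closedTrace.mp hz
  by_contra hzy
  have hxz : G.Adj x z := hxz.resolve_left fun hxz =>
    hzy (mem_closedTrace.mpr ⟨hzC, .inr (hxz ▸ hxy.symm)⟩)
  obtain ⟨u, hu, v, hv, huv⟩ := hedge i j
  have hnon {a : V} (ha : a ∈ C \ (Q i ∪ Q j)) : ¬G.Adj a x ∧ ¬G.Adj a y ∧ ¬G.Adj a z := by
    simp only [Finset.mem_sdiff, Finset.mem_union, not_or] at ha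
    exact ⟨not_adj_of_closedTrace_subset hx ha.1 ha.2.1,
      not_adj_of_closedTrace_subset hy ha.1 ha.2.2,
      h.not_adj_of_mem_sdiff (Finset.mem_sdiff.mpr ⟨ha.1, ha.2.1⟩) hzi⟩
  have hyz : y ≠ z := fun hyz => hzy (mem_closedTrace.mpr ⟨hzC, .inl hyz⟩)
  refine hzy (mem_closedTrace.mpr ⟨hzC, .inr ?_⟩)
  exact hfree.isClusterOn_nonneighbors huv ⟨(hnon hu).2.1, (hnon hv).2.1⟩
    ⟨(hnon hu).1, (hnon hv).1⟩ ⟨(hnon hu).2.2, (hnon hv).2.2⟩ hxy.symm hxz hyz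

open Classical in
/-- The vertices whose closed neighbourhood within `C` is empty or one of the cliques `Q i`. Adding
them to the cliques of `C` gives a larger disjoint union of cliques. -/
noncomputable def cliqueTraceSet [Fintype V] (G : SimpleGraph V) (C : Finset V)
    (Q : ι → Finset V) : Finset V :=
  {v | closedTrace G C v = ∅ ∨ ∃ i, closedTrace G C v = Q i}

variable [Fintype V]

theorem mem_cliqueTraceSet :
    v ∈ cliqueTraceSet G C Q ↔ closedTrace G C v = ∅ ∨ ∃ i, closedTrace G C v = Q i := by
  simp [cliqueTraceSet]

theorem exists_closedTrace_subset [Nonempty ι] (hv : v ∈ cliqueTraceSet G C Q) :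
    ∃ i, closedTrace G C v ⊆ Q i := by
  rcases mem_cliqueTraceSet.mp hv with hempty | ⟨i, hi⟩
  · exact ⟨Classical.arbitrary ι, by simp [hempty]⟩
  · exact ⟨i, hi.subset⟩

namespace IsCliquePartition

theorem subset_cliqueTraceSet (h : IsCliquePartition G C Q) : C ⊆ cliqueTraceSet G C Q := by
  intro v hv
  obtain ⟨i, hi⟩ := (h.mem_iff v).mp hv
  refine mem_cliqueTraceSet.mpr
    (.inr ⟨i, Finset.ext fun w => mem_closedTrace.trans ⟨?_, fun hw => ?_⟩⟩)
  · rintro ⟨hwC, rfl | hvw⟩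
    · exact hi
    · exact h.mem_of_adj hi hvw hwC
  · exact ⟨h.subset i hw, or_iff_not_imp_left.mpr (h.isClique i hi hw)⟩

theorem isClusterOn_cliqueTraceSet [DecidableEq V] [Nonempty ι] (h : IsCliquePartition G C Q)
    (hfree : P2P3Free G)
    (hedge : ∀ i j, ∃ u ∈ C \ (Q i ∪ Q j), ∃ v ∈ C \ (Q i ∪ Q j), G.Adj u v) :
    IsClusterOn G (cliqueTraceSet G C Q : Set V) := by
  intro a b c ha hb hc hab hbc hac
  obtain ⟨i, hi⟩ := exists_closedTrace_subset ha
  obtain ⟨j, hj⟩ := exists_closedTrace_subset hb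
  obtain ⟨l, hl⟩ := exists_closedTrace_subset hc
  have hbi := (h.closedTrace_subset_of_adj hfree hedge hj hi hab.symm).trans hi
  have hci := (h.closedTrace_subset_of_adj hfree hedge hl hj hbc.symm).trans hbi
  obtain ⟨u, hu, v, hv, huv⟩ := hedge i i
  simp only [Finset.union_self, Finset.mem_sdiff] at hu hv
  have hnon {x : V} (hx : closedTrace G C x ⊆ Q i) : ¬G.Adj u x ∧ ¬G.Adj v x :=
    ⟨not_adj_of_closedTrace_subset hx hu.1 hu.2, not_adj_of_closedTrace_subset hx hv.1 hv.2⟩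
  exact hfree.isClusterOn_nonneighbors huv (hnon hi) (hnon hbi) (hnon hci) hab hbc hac

theorem exists_card_filter_not_adj_le_one (h : IsCliquePartition G C Q) (hfree : P2P3Free G)
    [DecidableRel G.Adj] (hv : v ∉ cliqueTraceSet G C Q) :
    ∃ i, ∀ j ≠ i, ((Q j).filter fun w => ¬G.Adj v w).card ≤ 1 := by
  have hvC : v ∉ C := fun hvC => hv (h.subset_cliqueTraceSet hvC)
  have hsub (j) : (Q j).filter (fun w => ¬G.Adj v w) ⊆ Q j := Finset.filter_subset _ _
  by_cases hmixed : ∃ i, ∃ w ∈ Q i, ∃ w' ∈ Q i, G.Adj v w ∧ ¬G.Adj v w'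
  · obtain ⟨i, w, hw, w', hw', hvw, hvw'⟩ := hmixed
    refine ⟨i, fun j hj => hfree.card_le_one_of_isClique ((h.isClique j).subset (hsub j)) hvw
      (h.isClique i hw hw' fun hww' => hvw' (hww' ▸ hvw))
      (fun hvw' => hvC (hvw' ▸ h.subset i hw')) hvw' fun p hp => ?_⟩
    obtain ⟨hpj, hvp⟩ := Finset.mem_filter.mp hp
    exact ⟨fun hpv => hvp hpv.symm, fun hpw => hj (h.eq_of_adj hpj hw hpw),
      fun hpw' => hj (h.eq_of_adj hpj hw' hpw')⟩
  · push Not at hmixed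
    rw [mem_cliqueTraceSet, not_or, not_exists] at hv
    have htrace {w : V} : w ∈ closedTrace G C v ↔ w ∈ C ∧ G.Adj v w := mem_closedTrace.trans
      (and_congr_right fun hwC => or_iff_right (ne_of_mem_of_not_mem hwC hvC).symm)
    obtain ⟨w, hw⟩ := Finset.nonempty_iff_ne_empty.mpr hv.1
    obtain ⟨hwC, hvw⟩ := htrace.mp hw
    obtain ⟨i, hwi⟩ := (h.mem_iff w).mp hwC
    have hQi : Q i ⊆ closedTrace G C v := fun p hp =>
      htrace.mpr ⟨h.subset i hp, hmixed i w hwi p hp hvw⟩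
    obtain ⟨w', hw', hw'i⟩ := Finset.not_subset.mp fun hle => hv.2 i (hle.antisymm hQi)
    obtain ⟨hw'C, hvw'⟩ := htrace.mp hw'
    refine ⟨i, fun j hj => hfree.card_le_one_of_isClique ((h.isClique j).subset (hsub j)) hvw.symm
      hvw' (ne_of_mem_of_not_mem hwi hw'i) (fun hww' => hw'i (h.mem_of_adj hwi hww' hw'C))
      fun p hp => ?_⟩
    obtain ⟨hpj, hvp⟩ := Finset.mem_filter.mp hp
    exact ⟨fun hpw => hj (h.eq_of_adj hpj hwi hpw), fun hpv => hvp hpv.symm,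
      fun hpw' => hvp (hmixed j w' (h.mem_of_adj hpj hpw' hw'C) p hpj hvw')⟩

theorem exists_card_filter_not_adj_le [Fintype ι] (h : IsCliquePartition G C Q)
    (hfree : P2P3Free G) [DecidableRel G.Adj] (hv : v ∉ cliqueTraceSet G C Q) :
    ∃ i, (C.filter fun w => ¬G.Adj v w).card ≤ (Q i).card + Fintype.card ι := by
  classical
  obtain ⟨i, hi⟩ := h.exists_card_filter_not_adj_le_one hfree hv
  let M : ι → Finset V := fun j => (Q j).filter fun w => ¬G.Adj v w
  have hsub : (C.filter fun w => ¬G.Adj v w) ⊆ Q i ∪ (Finset.univ.erase i).biUnion M := by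
    intro w hw
    obtain ⟨hwC, hvw⟩ := Finset.mem_filter.mp hw
    obtain ⟨j, hj⟩ := (h.mem_iff w).mp hwC
    rcases eq_or_ne j i with rfl | hji
    · exact Finset.mem_union_left _ hj
    · exact Finset.mem_union_right _ (Finset.mem_biUnion.mpr
        ⟨j, by simpa using hji, Finset.mem_filter.mpr ⟨hj, hvw⟩⟩)
  have hM := Finset.card_biUnion_le_card_mul (Finset.univ.erase i) M 1 fun j hj =>
    hi j (Finset.ne_of_mem_erase hj)
  have herase := Finset.card_le_univ (Finset.univ.erase i)
  refine ⟨i, (Finset.card_le_card hsub).trans ((Finset.card_union_le _ _).trans ?_)⟩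
  omega

end IsCliquePartition

end Trace

theorem isLinkable_of_card_filter_not_adj [DecidableEq V] [DecidableRel G.Adj] {C : Finset V}
    {N : ℕ} {x y : V} (hx : x ∉ C) (hy : y ∉ C)
    (hN : (C.filter fun w => ¬G.Adj x w).card + (C.filter fun w => ¬G.Adj y w).card + N < C.card) :
    IsLinkable G C 1 N x y := by
  intro U hxU hyU hU
  have hcard := Finset.card_union_le ((C.filter fun w => ¬G.Adj x w) ∪ C.filter fun w => ¬G.Adj y w)
    (U ∩ C)
  have hcard' := Finset.card_union_le (C.filter fun w => ¬G.Adj x w) (C.filter fun w => ¬G.Adj y w)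
  have hlt := hcard.trans_lt (c := C.card) (by omega)
  obtain ⟨z, hzC, hz⟩ := Finset.exists_mem_notMem_of_card_lt_card hlt
  simp only [Finset.mem_union, Finset.mem_filter, Finset.mem_inter, hzC, true_and, and_true,
    not_or, not_not] at hz
  obtain ⟨⟨hxz, hyz⟩, hzU⟩ := hz
  refine ⟨{x, z, y}, by simp [hxU, hyU, hzU], ?_, ?_⟩
  · exact (Finset.card_le_card (t := {z}) fun w hw => by grind).trans (Finset.card_singleton z).le
  · exact (ReachableIn.of_adj (by simp) (by simp) hxz).trans
      (.of_adj (by simp) (by simp) hyz.symm)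

namespace IsCliquePartition

variable {C : Finset V} {ι : Type*} {Q : ι → Finset V}

theorem two_le_card_of_subset (h : IsCliquePartition G C Q) {κ : Type*} [Fintype κ]
    {R : Finset V} {P : κ → Finset V} (hP : IsCliquePartition G R P) (hCR : C ⊆ R) {i : ι}
    (hi : (Q i).card < C.card) : 2 ≤ Fintype.card κ := by
  classical
  obtain ⟨u, huC, hui⟩ := Finset.exists_mem_notMem_of_card_lt_card hi
  obtain ⟨z, hz⟩ := h.nonempty i
  obtain ⟨j, hj⟩ := (hP.mem_iff u).mp (hCR huC)
  obtain ⟨l, hl⟩ := (hP.mem_iff z).mp (hCR (h.subset i hz))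
  refine Fintype.one_lt_card_iff.mpr ⟨j, l, ?_⟩
  rintro rfl
  exact h.not_adj_of_mem_sdiff (Finset.mem_sdiff.mpr ⟨huC, hui⟩) hz
    (hP.isClique j hj hl (ne_of_mem_of_not_mem hz hui).symm)

variable [DecidableEq V]

theorem exists_adj_sdiff_union [Fintype ι] (h : IsCliquePartition G C Q) {i j : ι}
    (hcard : (Q i).card + (Q j).card + Fintype.card ι < C.card) :
    ∃ u ∈ C \ (Q i ∪ Q j), ∃ v ∈ C \ (Q i ∪ Q j), G.Adj u v := by
  refine h.exists_adj_of_card_lt Finset.sdiff_subset ?_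
  have := Finset.le_card_sdiff (Q i ∪ Q j) C
  have := Finset.card_union_le (Q i) (Q j)
  omega

variable [Fintype V]

theorem card_index_le [Fintype ι] (h : IsCliquePartition G C Q) (ht : IsTough 15 G)
    (hC : 16 * Cᶜ.card ≤ 7 * Fintype.card V) (hn : 35 ≤ Fintype.card V) :
    240 * Fintype.card ι ≤ 7 * Fintype.card V := by
  have : 2 ≤ Fintype.card ι → 15 * Fintype.card ι ≤ Cᶜ.card := fun h2 => by
    exact_mod_cast h.mul_card_le_card_compl ht h2
  omega

theorem mul_card_filter_not_adj_le (h : IsCliquePartition G C Q) (hfree : P2P3Free G)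
    (ht : IsTough 15 G) (hC : 16 * Cᶜ.card ≤ 7 * Fintype.card V) (hn : 35 ≤ Fintype.card V)
    (hQ : ∀ i, 16 * (Q i).card < 3 * Fintype.card V) [DecidableRel G.Adj] {x : V}
    (hx : x ∉ cliqueTraceSet G C Q) :
    240 * (C.filter fun w => ¬G.Adj x w).card ≤ 52 * Fintype.card V := by
  have := h.finite
  have := Fintype.ofFinite ι
  have hι := h.card_index_le ht hC hn
  obtain ⟨i, hi⟩ := h.exists_card_filter_not_adj_le hfree hx
  have := hQ i
  omega

theorem lowVertices_subset_cliqueTraceSet (h : IsCliquePartition G C Q) (hfree : P2P3Free G)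
    (ht : IsTough 15 G) (hC : 16 * Cᶜ.card ≤ 7 * Fintype.card V) (hn : 35 ≤ Fintype.card V)
    (hQ : ∀ i, 16 * (Q i).card < 3 * Fintype.card V) : lowVertices G ⊆ cliqueTraceSet G C Q := by
  classical
  intro x hx
  by_contra hxR
  rw [mem_lowVertices] at hx
  have := card_filter_adj_le_degree (G := G) (v := x) C
  have := Finset.card_filter_add_card_filter_not (s := C) (G.Adj x)
  have := h.mul_card_filter_not_adj_le hfree ht hC hn hQ hxR
  have := Finset.card_add_card_compl C
  omega

theorem exists_isCycleSet_lowVertices_of_card_lt (h : IsCliquePartition G C Q)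
    (hfree : P2P3Free G) (ht : IsTough 15 G) (hL : (lowVertices G).Nonempty)
    (hC : 16 * Cᶜ.card ≤ 7 * Fintype.card V) (hQ : ∀ i, 16 * (Q i).card < 3 * Fintype.card V) :
    ∃ X, IsCycleSet G X ∧ ↑(lowVertices G) ⊆ X := by
  classical
  have := h.finite
  have := Fintype.ofFinite ι
  have hn := ht.le_card_of_nonempty_lowVertices hL
  have hcard := Finset.card_add_card_compl C
  have hι := h.card_index_le ht hC (by omega)
  obtain ⟨v, hv⟩ := Finset.card_pos.mp (by omega : 0 < C.card)
  have : Nonempty ι := ((h.mem_iff v).mp hv).nonempty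
  have hedge (i j : ι) := h.exists_adj_sdiff_union (i := i) (j := j)
    (by have := hQ i; have := hQ j; omega)
  have hnonadj {x : V} := h.mul_card_filter_not_adj_le hfree ht hC (by omega) hQ (x := x)
  have hCR := h.subset_cliqueTraceSet
  have hLR := h.lowVertices_subset_cliqueTraceSet hfree ht hC (by omega) hQ
  obtain ⟨k, P, hP⟩ :=
    (h.isClusterOn_cliqueTraceSet hfree hedge).exists_isCliquePartition (hL.mono hLR)
  have hk2 := h.two_le_card_of_subset hP hCR (i := Classical.arbitrary ι)
    (by have := hQ (Classical.arbitrary ι); omega)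
  have hk := hP.mul_card_le_card_compl ht hk2
  have hRC : (cliqueTraceSet G C Q)ᶜ.card ≤ Cᶜ.card :=
    Finset.card_le_card (Finset.compl_subset_compl.mpr hCR)
  rw [Fintype.card_fin] at hk2 hk
  have hkC : 15 * (k + 1) ≤ Cᶜ.card := le_trans (by exact_mod_cast hk) hRC
  have hk2' : (2 : ℝ) ≤ (k + 1 : ℕ) := by exact_mod_cast hk2
  have hmin : ∑ i, min 2 (P i ∩ C).card ≤ (k + 1) * 2 := by
    simpa using Finset.sum_le_card_nsmul Finset.univ _ 2 fun i _ => min_le_left 2 (P i ∩ C).card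
  obtain ⟨X, hX, hRX⟩ := hP.exists_isCycleSet_of_isLinkable (A := C) (c := 1)
    (N := 1 * k + (k + 1) * 2) ht (by norm_num) (by linarith) (by omega) fun x hx y hy _ _ _ =>
      isLinkable_of_card_filter_not_adj (fun hxC => hx (hCR hxC)) (fun hyC => hy (hCR hyC)) (by
        have := hnonadj hx
        have := hnonadj hy
        omega)
  exact ⟨X, hX, (Finset.coe_subset.mpr hLR).trans hRX⟩

end IsCliquePartition

/-! ## Cycles through the vertices of low degree -/

theorem P2P3Free.isClusterOn_of_not_reachableIn (hfree : P2P3Free G) {s : Set V} {x x' y y' : V}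
    (hx : x ∈ s) (hx' : x' ∈ s) (hxx' : G.Adj x x') (hy : y ∈ s) (hy' : y' ∈ s)
    (hyy' : G.Adj y y') (hxy : ¬ReachableIn G s x y) : IsClusterOn G s := by
  intro a b c ha hb hc hab hbc hac
  by_contra hnac
  have hsame {p q : V} (hp : p ∈ s) (hq : q ∈ s) (hpq : G.Adj p q) : ReachableIn G s p a := by
    by_contra hpa
    have hba : ReachableIn G s b a := .of_adj hb ha hab.symm
    have hca : ReachableIn G s c a := (ReachableIn.of_adj hc hb hbc.symm).trans hba
    have hpq' : ReachableIn G s p q := .of_adj hp hq hpq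
    have hnonadj {w : V} (hw : w ∈ s) (hwa : ReachableIn G s w a) : ¬G.Adj p w ∧ ¬G.Adj q w :=
      ⟨fun h => hpa ((ReachableIn.of_adj hp hw h).trans hwa),
        fun h => hpa (hpq'.trans ((ReachableIn.of_adj hq hw h).trans hwa))⟩
    exact hnac (hfree.isClusterOn_nonneighbors hpq (hnonadj ha (.refl ha)) (hnonadj hb hba)
      (hnonadj hc hca) hab hbc hac)
  exact hxy ((hsame hx hx' hxx').trans (hsame hy hy' hyy').symm)

theorem exists_adj_notMem_of_card_lt_degree {U : Finset V} {v : V} [Fintype (G.neighborSet v)]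
    (h : U.card < G.degree v) : ∃ w ∉ U, G.Adj v w := by
  obtain ⟨w, hw, hwU⟩ := Finset.exists_mem_notMem_of_card_lt_card h
  exact ⟨w, hwU, (G.mem_neighborFinset v w).mp hw⟩

section LowVertices

variable [Fintype V]

theorem P2P3Free.isLinkable_of_not_isClusterOn_compl [DecidableEq V] (hfree : P2P3Free G) {N : ℕ}
    (hno : ∀ U : Finset V, U.card ≤ N → ¬IsClusterOn G (↑U : Set V)ᶜ) {x y : V}
    [Fintype (G.neighborSet x)] [Fintype (G.neighborSet y)] (hx : N < G.degree x)
    (hy : N < G.degree y) : IsLinkable G Finset.univ 5 N x y := by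
  intro U hxU hyU hU
  rw [Finset.inter_univ] at hU
  obtain ⟨x', hx'U, hxx'⟩ := exists_adj_notMem_of_card_lt_degree (hU.trans_lt hx)
  obtain ⟨y', hy'U, hyy'⟩ := exists_adj_notMem_of_card_lt_degree (hU.trans_lt hy)
  have hreach : ReachableIn G (↑U : Set V)ᶜ x y := by
    by_contra hxy
    exact hno U hU
      (hfree.isClusterOn_of_not_reachableIn hxU hx'U hxx' hyU hy'U hyy' hxy)
  obtain ⟨Y, hYU, hY, hxy⟩ := hfree.exists_reachableIn_card_le_five hreach
  refine ⟨Y, Finset.disjoint_left.mpr fun z hzY => hYU hzY, ?_, hxy⟩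
  rwa [Finset.inter_univ]

theorem IsClusterOn.exists_isCycleSet_lowVertices [DecidableEq V] {C : Finset V}
    (hcluster : IsClusterOn G (↑C : Set V)) (hfree : P2P3Free G) (ht : IsTough 15 G)
    (hL : (lowVertices G).Nonempty) (hC : 16 * Cᶜ.card ≤ 7 * Fintype.card V) :
    ∃ X, IsCycleSet G X ∧ ↑(lowVertices G) ⊆ X := by
  have hn := ht.le_card_of_nonempty_lowVertices hL
  have hcard := Finset.card_add_card_compl C
  obtain ⟨k, Q, h⟩ := hcluster.exists_isCliquePartition (Finset.card_pos.mp (by omega))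
  by_cases hi : ∃ i, 3 * Fintype.card V ≤ 16 * (Q i).card
  · obtain ⟨i, hi⟩ := hi
    exact h.exists_isCycleSet_lowVertices_of_card_le hfree ht hL hC hi
  · push Not at hi
    exact h.exists_isCycleSet_lowVertices_of_card_lt hfree ht hL hC hi

theorem P2P3Free.degree_lt_of_adj_lowVertices (hfree : P2P3Free G)
    (hno : ∀ U : Finset V, 16 * U.card ≤ 7 * Fintype.card V → ¬IsClusterOn G (↑U : Set V)ᶜ)
    {u v : V} (hu : u ∈ lowVertices G) (huv : G.Adj u v) [Fintype (G.neighborSet v)] :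
    6 * Fintype.card V < 16 * G.degree v := by
  classical
  by_contra! hv
  rw [mem_lowVertices] at hu
  have hcard := Finset.card_union_le (G.neighborFinset u) (G.neighborFinset v)
  rw [card_neighborFinset_eq_degree, card_neighborFinset_eq_degree] at hcard
  refine hno (G.neighborFinset u ∪ G.neighborFinset v) (by omega) ?_
  convert hfree.isClusterOn_nonneighbors huv
  ext
  simp

theorem P2P3Free.isIndepSet_lowVertices (hfree : P2P3Free G)
    (hno : ∀ U : Finset V, 16 * U.card ≤ 7 * Fintype.card V → ¬IsClusterOn G (↑U : Set V)ᶜ) :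
    G.IsIndepSet (lowVertices G : Set V) := by
  classical
  intro u hu v hv _ huv
  have := hfree.degree_lt_of_adj_lowVertices hno hu huv
  rw [Finset.mem_coe, mem_lowVertices] at hv
  omega

theorem P2P3Free.exists_isCycleSet_lowVertices_of_not_isClusterOn (hfree : P2P3Free G)
    (ht : IsTough 15 G) (hL : (lowVertices G).Nonempty)
    (hno : ∀ U : Finset V, 16 * U.card ≤ 7 * Fintype.card V → ¬IsClusterOn G (↑U : Set V)ᶜ) :
    ∃ X, IsCycleSet G X ∧ ↑(lowVertices G) ⊆ X := by
  classical
  have hn := ht.le_card_of_nonempty_lowVertices hL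
  have hindep := hfree.isIndepSet_lowVertices hno
  have hcluster : IsClusterOn G (lowVertices G : Set V) := fun a b _ ha hb _ hab =>
    absurd hab (hindep ha hb hab.ne)
  obtain ⟨k, Q, h⟩ := hcluster.exists_isCliquePartition hL
  have hone (i) : (Q i).card ≤ 1 := Finset.card_le_one.mpr fun a ha b hb => by
    by_contra hab
    exact hindep (h.subset i ha) (h.subset i hb) hab (h.isClique i ha hb hab)
  have hLn : 16 * (lowVertices G).card ≤ Fintype.card V := by
    by_cases h2 : 2 ≤ (lowVertices G).card
    · have := ht.add_one_mul_card_le hindep h2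
      norm_num at this
      exact_mod_cast this
    · omega
  have hk := h.card_le
  rw [Fintype.card_fin] at hk
  have hsum : ∑ i, min 2 (Q i ∩ Finset.univ).card ≤ k + 1 := by
    simpa using Finset.sum_le_card_nsmul Finset.univ _ 1 fun i _ =>
      (min_le_right 2 (Q i).card).trans (hone i)
  have hcompl := Finset.card_add_card_compl (lowVertices G)
  have h14 : (15 - 1 : ℝ) ≤ (lowVertices G)ᶜ.card := by
    have : 14 ≤ (lowVertices G)ᶜ.card := by omega
    norm_num
    exact_mod_cast this
  refine h.exists_isCycleSet_of_isLinkable (A := Finset.univ) (c := 5)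
    (N := 5 * k + (k + 1)) ht (by norm_num) h14 (by omega) ?_
  rintro x - y - - ⟨u, hu, hux⟩ ⟨v, hv, hvy⟩
  have := hfree.degree_lt_of_adj_lowVertices hno hu hux
  have := hfree.degree_lt_of_adj_lowVertices hno hv hvy
  exact hfree.isLinkable_of_not_isClusterOn_compl (fun U hU => hno U (by omega)) (by omega)
    (by omega)

theorem IsTough.exists_isCycleSet {t : ℝ} (ht : IsTough t G) (h1 : 1 ≤ t)
    (hn : 3 ≤ Fintype.card V) : ∃ X, IsCycleSet G X := by
  classical
  have hdeg (v : V) : 2 ≤ G.degree v := by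
    by_contra! hv
    have hle := ht.two_mul_le_degree (v := v) (by omega)
    have : (G.degree v : ℝ) < 2 := by exact_mod_cast hv
    linarith
  obtain ⟨v⟩ : Nonempty V := Fintype.card_pos_iff.mp (by omega)
  obtain ⟨a, ha, b, hb, hab⟩ := Finset.one_lt_card.mp (hdeg v)
  rw [mem_neighborFinset] at ha hb
  have hreach : ReachableIn G (↑({v} : Finset V))ᶜ a b :=
    ht.reachableIn_compl (by push_cast [Finset.card_singleton]; linarith)
      (by simpa using ha.ne') (by simpa using hb.ne')
  obtain ⟨X, hXv, hX⟩ := hreach.exists_isPathSet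
  have hv : IsPathSet G ({v} : Finset V) v v :=
    isPathSet_of_isClique (by simp) (by simp) (by simp) (by simp)
  exact ⟨_, (hv.append ha hX (Set.disjoint_right.mpr hXv)).isCycleSet hb.symm
    (Set.mem_union_right _ hX.left_mem) ha.ne' hab⟩

theorem P2P3Free.exists_isCycleSet_lowVertices (hfree : P2P3Free G) (ht : IsTough 15 G)
    (hn : 3 ≤ Fintype.card V) : ∃ X, IsCycleSet G X ∧ ↑(lowVertices G) ⊆ X := by
  classical
  rcases (lowVertices G).eq_empty_or_nonempty with hL | hL
  · obtain ⟨X, hX⟩ := ht.exists_isCycleSet (by norm_num) hn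
    exact ⟨X, hX, by simp [hL]⟩
  · by_cases hno : ∀ U : Finset V, 16 * U.card ≤ 7 * Fintype.card V → ¬IsClusterOn G (↑U : Set V)ᶜ
    · exact hfree.exists_isCycleSet_lowVertices_of_not_isClusterOn ht hL hno
    · push Not at hno
      obtain ⟨U, hU, hcluster⟩ := hno
      rw [← Finset.coe_compl] at hcluster
      exact hcluster.exists_isCycleSet_lowVertices hfree ht hL (by rwa [compl_compl])

end LowVertices

end

theorem stmt11 [Fintype V] [DecidableEq V] (G : SimpleGraph V) (hn : 3 ≤ Fintype.card V)
    (htough : IsTough 15 G) (hfree : P2P3Free G) : G.IsHamiltonian := by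
  classical
  obtain ⟨X₀, hX₀, hLX₀⟩ := hfree.exists_isCycleSet_lowVertices htough hn
  obtain ⟨X, hX₀X, hX⟩ := exists_maximal_isCycleSet hX₀
  suffices hXuniv : X = Set.univ from (hXuniv ▸ hX.prop).isHamiltonian
  refine Set.eq_univ_of_forall fun x => by_contra fun hx => hx (hX₀X (hLX₀ ?_))
  have hdeg := htough.mul_degree_add_one_le_of_maximal (by norm_num) hfree hX hx
  norm_num at hdeg
  exact mem_lowVertices.mpr (by exact_mod_cast hdeg)
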